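/- arXiv:math/0610240 — 4 statements merged into one kernel-verified Lean document; each statement's English description precedes it below -/
import Mathlib

section
/- The normalized probabilists' Hermite polynomials t ↦ He_n(t)/√(n!), n = 0, 1, 2, …, form a Hilbert basis (a complete orthonormal system) of L²(ℝ, γ), where γ is the standard Gaussian measure on ℝ; in particular ∫_ℝ He_m(t)·He_n(t) dγ(t) = n!·δ_{mn} and the closed linear span of the polynomials is all of L²(ℝ, γ). -/
open MeasureTheory ProbabilityTheory
open scoped Nat

noncomputable section

/-- The normalized probabilists' Hermite function `t ↦ He_n(t)/√(n!)`. -/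
def normalizedHermite (n : ℕ) (t : ℝ) : ℝ :=
  Polynomial.aeval t (Polynomial.hermite n) / Real.sqrt (n ! : ℝ)

namespace HermAux
open Polynomial

lemma integrable_poly (p : ℝ[X]) : Integrable (fun x => p.eval x) (gaussianReal 0 1) := by
  induction p using Polynomial.induction_on' with
  | add p q hp hq => simp only [eval_add]; exact hp.add hq
  | monomial n a =>
    simp only [eval_monomial]
    exact (integrable_pow_of_mem_interior_integrableExpSet (X := fun x : ℝ => x)
      (by simp) n).const_mul a

lemma memLp_poly (p : ℝ[X]) : MemLp (fun x => p.eval x) 2 (gaussianReal 0 1) := by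
  rw [memLp_two_iff_integrable_sq p.continuous.aestronglyMeasurable]
  exact (integrable_poly (p ^ 2)).congr (ae_of_all _ fun x => by simp)

lemma integrable_pdf (p : ℝ[X]) :
    Integrable (fun x => p.eval x * gaussianPDFReal 0 1 x) := by
  have h := integrable_poly p
  rw [gaussianReal_of_var_ne_zero _ one_ne_zero, integrable_withDensity_iff_integrable_smul'
    (measurable_gaussianPDF _ _) (by simp [gaussianPDF])] at h
  refine h.congr (ae_of_all _ fun x => ?_)
  simp [mul_comm]

lemma integral_pdf (p : ℝ[X]) :
    ∫ x, p.eval x ∂(gaussianReal 0 1) = ∫ x, p.eval x * gaussianPDFReal 0 1 x := by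
  rw [integral_gaussianReal_eq_integral_smul one_ne_zero]
  simp [mul_comm]

lemma hasDerivAt_pdf (x : ℝ) :
    HasDerivAt (gaussianPDFReal 0 1) (-x * gaussianPDFReal 0 1 x) x := by
  rw [gaussianPDFReal_def]
  have h : HasDerivAt (fun x : ℝ => -(x - 0) ^ 2 / (2 * ((1 : NNReal) : ℝ))) (-x) x := by
    have := ((hasDerivAt_pow 2 x).neg).div_const 2
    simp only [sub_zero, NNReal.coe_one, mul_one]
    exact HasDerivAt.congr_deriv this (by simp; ring)
  exact HasDerivAt.congr_deriv (h.exp.const_mul (√(2 * Real.pi * ((1 : NNReal) : ℝ)))⁻¹)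
    (by ring)

lemma ibp (p : ℝ[X]) :
    ∫ x, (X * p).eval x ∂(gaussianReal 0 1) = ∫ x, (derivative p).eval x ∂(gaussianReal 0 1) := by
  rw [integral_pdf, integral_pdf]
  have := integral_mul_deriv_eq_deriv_mul_of_integrable (u := fun x => p.eval x)
    (u' := fun x => (derivative p).eval x) (v := gaussianPDFReal 0 1)
    (v' := fun x => -x * gaussianPDFReal 0 1 x)
    (fun x _ => p.hasDerivAt x) (fun x _ => hasDerivAt_pdf x)
    ((integrable_pdf (-(X * p))).congr (ae_of_all _ fun x => by simp; ring))
    (integrable_pdf _) (integrable_pdf _)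
  rw [← neg_inj, ← this, ← integral_neg]
  congr 1; ext x; simp; ring

def H (n : ℕ) : ℝ[X] := (hermite n).map (Int.castRingHom ℝ)

lemma H_succ (n : ℕ) : H (n + 1) = X * H n - derivative (H n) := by
  simp [H, hermite_succ, derivative_map]

lemma aeval_eq (n : ℕ) (t : ℝ) : aeval t (hermite n) = (H n).eval t := by
  simp [H, aeval_def, eval_map]

lemma monic_H (n : ℕ) : (H n).Monic := (hermite_monic n).map _
lemma natDegree_H (n : ℕ) : (H n).natDegree = n := by
  rw [H, (hermite_monic n).natDegree_map, natDegree_hermite]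

lemma integral_H_mul (m : ℕ) (q : ℝ[X]) :
    ∫ x, (H m * q).eval x ∂(gaussianReal 0 1)
      = ∫ x, (derivative^[m] q).eval x ∂(gaussianReal 0 1) := by
  induction m generalizing q with
  | zero => simp [H]
  | succ m ih =>
    rw [Function.iterate_succ_apply, ← ih]
    have h := ibp (H m * q)
    have e : H (m + 1) * q = X * (H m * q) - derivative (H m) * q := by rw [H_succ]; ring
    rw [e]
    simp only [eval_sub]
    rw [integral_sub (integrable_poly _) (integrable_poly _), h, derivative_mul]
    simp only [eval_add]
    rw [integral_add (integrable_poly _) (integrable_poly _)]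
    ring

lemma integral_H_lt {m n : ℕ} (h : n < m) :
    ∫ x, (H m * H n).eval x ∂(gaussianReal 0 1) = 0 := by
  rw [integral_H_mul, iterate_derivative_eq_zero (by rwa [natDegree_H])]
  simp

lemma integral_H_self (n : ℕ) :
    ∫ x, (H n * H n).eval x ∂(gaussianReal 0 1) = n ! := by
  have h : derivative^[n] (H n) = C (n ! : ℝ) := by
    have h0 : (derivative^[n] (H n)).natDegree = 0 := by
      have := natDegree_iterate_derivative (H n) n
      rw [natDegree_H] at this; omega
    rw [eq_C_of_natDegree_eq_zero h0, coeff_iterate_derivative]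
    have := (monic_H n).coeff_natDegree
    rw [natDegree_H] at this
    simp [this, Nat.descFactorial_self]
  rw [integral_H_mul, h]
  simp

lemma integral_H (m n : ℕ) :
    ∫ x, (H m).eval x * (H n).eval x ∂(gaussianReal 0 1) = if m = n then (n ! : ℝ) else 0 := by
  simp only [← eval_mul]
  rcases lt_trichotomy m n with h | h | h
  · rw [if_neg h.ne, mul_comm, integral_H_lt h]
  · subst h; simp [integral_H_self, -eval_mul]
  · rw [if_neg h.ne', integral_H_lt h]

lemma span_H : Submodule.span ℝ (Set.range H) = ⊤ := by
  let S : Polynomial.Sequence ℝ := ⟨H, fun i => by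
    rw [degree_eq_natDegree (monic_H i).ne_zero, natDegree_H]⟩
  exact S.span (fun i => by
    have : (S i).leadingCoeff = 1 := monic_H i
    rw [this]; exact isUnit_one)

lemma memLp_exp (t : ℝ) : MemLp (fun x => Real.exp (|t| * |x|)) 2 (gaussianReal 0 1) := by
  rw [memLp_two_iff_integrable_sq (by fun_prop)]
  have := integrable_exp_abs_mul_abs (X := fun x : ℝ => x) (t := 2 * t)
    (integrable_exp_mul_gaussianReal (μ := 0) (v := 1) _) (integrable_exp_mul_gaussianReal _)
  refine this.congr (ae_of_all _ fun x => ?_)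
  simp only [abs_mul, abs_two, sq, ← Real.exp_add]
  ring_nf

lemma fourier_zero (f : ℝ → ℝ) (hf : MemLp f 2 (gaussianReal 0 1))
    (h : ∀ n : ℕ, ∫ x, x ^ n * f x ∂(gaussianReal 0 1) = 0) (t : ℝ) :
    ∫ x, (f x : ℂ) * Complex.exp (t * x * Complex.I) ∂(gaussianReal 0 1) = 0 := by
  have hs := hasSum_integral_of_dominated_convergence (μ := gaussianReal 0 1)
    (F := fun (n : ℕ) (x : ℝ) => (f x : ℂ) * ((t * x * Complex.I) ^ n / (n ! : ℂ)))
    (f := fun x => (f x : ℂ) * Complex.exp (t * x * Complex.I))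
    (fun n x => |f x| * ((|t| * |x|) ^ n / (n ! : ℝ)))
    (fun n => by
      refine AEStronglyMeasurable.mul (Complex.continuous_ofReal.comp_aestronglyMeasurable hf.1) ?_
      exact Continuous.aestronglyMeasurable (by fun_prop))
    (fun n => ae_of_all _ fun x => by simp)
    (ae_of_all _ fun x => (Real.summable_pow_div_factorial _).mul_left _)
    (by
      have : ∀ x : ℝ, ∑' n : ℕ, |f x| * ((|t| * |x|) ^ n / (n ! : ℝ))
          = |f x| * Real.exp (|t| * |x|) := fun x => by
        rw [tsum_mul_left, Real.exp_eq_exp_ℝ, NormedSpace.exp_eq_tsum_div]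
      simp only [this]
      exact hf.abs.integrable_mul (memLp_exp t))
    (ae_of_all _ fun x => by
      refine HasSum.mul_left _ ?_
      rw [Complex.exp_eq_exp_ℂ]
      exact NormedSpace.expSeries_div_hasSum_exp _)
  refine hs.unique ?_
  have : ∀ n : ℕ, ∫ x, (f x : ℂ) * ((t * x * Complex.I) ^ n / (n ! : ℂ)) ∂(gaussianReal 0 1) = 0 := by
    intro n
    have e : ∀ x : ℝ, (f x : ℂ) * ((t * x * Complex.I) ^ n / (n ! : ℂ))
        = ((t * Complex.I) ^ n / (n ! : ℂ)) * ((x ^ n * f x : ℝ) : ℂ) := fun x => by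
      push_cast; ring
    simp only [e]
    rw [integral_const_mul, integral_complex_ofReal, h n]; simp
  simp only [this]
  exact hasSum_zero

lemma ae_zero (f : ℝ → ℝ) (hm : Measurable f) (hf : MemLp f 2 (gaussianReal 0 1))
    (h : ∀ n : ℕ, ∫ x, x ^ n * f x ∂(gaussianReal 0 1) = 0) : f =ᵐ[gaussianReal 0 1] 0 := by
  have hi : Integrable f (gaussianReal 0 1) := hf.integrable (by norm_num)
  have hmn : Measurable (fun x => -f x) := hm.neg
  have hfin : ∀ g : ℝ → ℝ, Integrable g (gaussianReal 0 1) →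
      ∫⁻ x, ((g x).toNNReal : ENNReal) ∂(gaussianReal 0 1) ≠ ⊤ := fun g hg =>
    (hg.lintegral_lt_top).ne
  have hI : ∀ (g : ℝ → ℝ) (t : ℝ), Integrable g (gaussianReal 0 1) →
      Integrable (fun x => (g x).toNNReal • Complex.exp (t * x * Complex.I)) (gaussianReal 0 1) := by
    intro g t hg
    refine hg.norm.mono' ?_ (ae_of_all _ fun x => ?_)
    · refine AEStronglyMeasurable.smul ?_ (Continuous.aestronglyMeasurable (by fun_prop))
      exact (NNReal.continuous_coe.comp continuous_real_toNNReal).comp_aestronglyMeasurable hg.1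
    · have : ‖Complex.exp (t * x * Complex.I)‖ = 1 := by
        rw [← Complex.ofReal_mul, Complex.norm_exp_ofReal_mul_I]
      rw [NNReal.smul_def, norm_smul, this]
      simp only [Real.coe_toNNReal', mul_one, Real.norm_eq_abs]
      rw [abs_of_nonneg (le_max_right _ _)]
      exact max_le (le_abs_self _) (abs_nonneg _)
  have key : (gaussianReal 0 1).withDensity (fun x => ((f x).toNNReal : ENNReal))
      = (gaussianReal 0 1).withDensity (fun x => ((-f x).toNNReal : ENNReal)) := by
    have := isFiniteMeasure_withDensity (hfin f hi)
    have := isFiniteMeasure_withDensity (hfin (fun x => -f x) hi.neg)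
    apply Measure.ext_of_charFun
    ext t
    rw [charFun_apply_real, charFun_apply_real,
      integral_withDensity_eq_integral_smul hm.real_toNNReal,
      integral_withDensity_eq_integral_smul hmn.real_toNNReal, ← sub_eq_zero,
      ← integral_sub (hI f t hi) (hI (fun x => -f x) t hi.neg), ← fourier_zero f hf h t]
    congr 1; ext x
    rw [NNReal.smul_def, NNReal.smul_def, ← sub_smul, Complex.real_smul]
    congr 2
    simp only [Real.coe_toNNReal']
    rcases le_total (f x) 0 with h | h
    · rw [max_eq_right h, max_eq_left (by linarith)]; ring
    · rw [max_eq_left h, max_eq_right (by linarith)]; ring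
  rw [withDensity_eq_iff hm.real_toNNReal.coe_nnreal_ennreal.aemeasurable
    hmn.real_toNNReal.coe_nnreal_ennreal.aemeasurable (hfin f hi)] at key
  filter_upwards [key] with x hx
  have := congrArg NNReal.toReal (ENNReal.coe_injective hx)
  simp only [Real.coe_toNNReal'] at this
  simp only [Pi.zero_apply]
  rcases le_total (f x) 0 with h | h
  · rw [max_eq_right h, max_eq_left (by linarith)] at this; linarith
  · rw [max_eq_left h, max_eq_right (by linarith)] at this; linarith

end HermAux

open HermAux in
/-- The normalized probabilists' Hermite polynomials form a Hilbert basis (a complete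
orthonormal system) of `L²(ℝ, γ)` where `γ` is the standard Gaussian measure: the Hermite
polynomials satisfy `∫ He_m·He_n dγ = n!·δ_{mn}`, and any family `g` of elements of
`L²(ℝ, γ)` representing the functions `t ↦ He_n(t)/√(n!)` is orthonormal with dense span. -/
theorem normalizedHermite_hilbertBasis
    (g : ℕ → Lp ℝ 2 (gaussianReal 0 1))
    (hg : ∀ n, (g n : ℝ → ℝ) =ᵐ[gaussianReal 0 1] normalizedHermite n) :
    (∀ m n : ℕ, ∫ t, Polynomial.aeval t (Polynomial.hermite m) *
          Polynomial.aeval t (Polynomial.hermite n) ∂(gaussianReal 0 1)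
        = if m = n then (n ! : ℝ) else 0)
    ∧ Orthonormal ℝ g
    ∧ (Submodule.span ℝ (Set.range g)).topologicalClosure = ⊤ := by
  have h1 : ∀ m n : ℕ, ∫ t, Polynomial.aeval t (Polynomial.hermite m) *
          Polynomial.aeval t (Polynomial.hermite n) ∂(gaussianReal 0 1)
        = if m = n then (n ! : ℝ) else 0 := fun m n => by
    simp only [aeval_eq]; exact integral_H m n
  refine ⟨h1, ?_, ?_⟩
  · rw [orthonormal_iff_ite]
    intro m n
    rw [L2.inner_def]
    have : ∫ a, inner ℝ ((g m : ℝ → ℝ) a) ((g n : ℝ → ℝ) a) ∂(gaussianReal 0 1)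
        = ∫ a, (√(m ! : ℝ) * √(n ! : ℝ))⁻¹ * ((H m).eval a * (H n).eval a)
          ∂(gaussianReal 0 1) := by
      refine integral_congr_ae ?_
      filter_upwards [hg m, hg n] with a ha hb
      rw [ha, hb]
      simp only [normalizedHermite, aeval_eq, RCLike.inner_apply, conj_trivial]
      rw [mul_inv]; ring
    rw [this, integral_const_mul, integral_H]
    split_ifs with h
    · subst h
      rw [Real.mul_self_sqrt (by positivity), inv_mul_cancel₀ (by positivity)]
    · simp
  · rw [Submodule.topologicalClosure_eq_top_iff, Submodule.eq_bot_iff]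
    intro f hf
    rw [Submodule.mem_orthogonal] at hf
    have hfL := Lp.memLp f
    have hip : ∀ p : Polynomial ℝ,
        Integrable (fun x => p.eval x * (f : ℝ → ℝ) x) (gaussianReal 0 1) :=
      fun p => (memLp_poly p).integrable_mul hfL
    have hH : ∀ n, ∫ x, (H n).eval x * (f : ℝ → ℝ) x ∂(gaussianReal 0 1) = 0 := by
      intro n
      have := hf (g n) (Submodule.subset_span ⟨n, rfl⟩)
      rw [L2.inner_def] at this
      have e : ∫ a, inner ℝ ((g n : ℝ → ℝ) a) ((f : ℝ → ℝ) a) ∂(gaussianReal 0 1)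
        = ∫ a, (√(n ! : ℝ))⁻¹ * ((H n).eval a * (f : ℝ → ℝ) a) ∂(gaussianReal 0 1) := by
        refine integral_congr_ae ?_
        filter_upwards [hg n] with a ha
        rw [ha]
        simp only [normalizedHermite, aeval_eq, RCLike.inner_apply, conj_trivial]
        ring
      rw [e, integral_const_mul] at this
      exact (mul_eq_zero.1 this).resolve_left (by positivity)
    have hp : ∀ p : Polynomial ℝ, ∫ x, p.eval x * (f : ℝ → ℝ) x ∂(gaussianReal 0 1) = 0 := by
      intro p
      have hmem : p ∈ Submodule.span ℝ (Set.range H) := by rw [span_H]; trivial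
      induction hmem using Submodule.span_induction with
      | mem x hx => obtain ⟨n, rfl⟩ := hx; exact hH n
      | zero => simp
      | add p q _ _ hp hq =>
        simp only [Polynomial.eval_add, add_mul]
        rw [integral_add (hip p) (hip q), hp, hq, add_zero]
      | smul a p _ hp =>
        simp only [Polynomial.eval_smul, smul_eq_mul, mul_assoc]
        rw [integral_const_mul, hp, mul_zero]
    have hz := ae_zero f (Lp.stronglyMeasurable f).measurable hfL
      (fun n => by simpa using hp (Polynomial.X ^ n))
    exact Lp.eq_zero_iff_ae_eq_zero.2 hz
end
end

section
/- For every s ∈ ℝ the discrete Hermite kernel K_s is an orthogonal projection kernel on ℕ: it is symmetric, for all x, y ∈ ℕ the series Σ_{z=0}^∞ K_s(x,z)·K_s(z,y) converges absolutely and equals K_s(x,y), and 0 ≤ K_s(x,x) ≤ 1 for all x ∈ ℕ. -/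
open scoped Nat

noncomputable section

/-- The discrete Hermite kernel with parameter `s ∈ ℝ`:
`K_s(x,y) = (2π·x!·y!)^{−1/2} ∫_s^∞ e^{−t²/2}·He_x(t)·He_y(t) dt` for `x, y ∈ ℕ`,
where `He_n` is the probabilists' Hermite polynomial. -/
def discreteHermiteKernel (s : ℝ) (x y : ℕ) : ℝ :=
  (Real.sqrt (2 * Real.pi * (x ! : ℝ) * (y ! : ℝ)))⁻¹ *
    ∫ t in Set.Ioi s, Real.exp (-t ^ 2 / 2) * Polynomial.aeval t (Polynomial.hermite x) *
      Polynomial.aeval t (Polynomial.hermite y)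

namespace DHK
open MeasureTheory Polynomial

lemma integrable_poly (P : ℝ[X]) {b : ℝ} (hb : 0 < b) :
    Integrable (fun t : ℝ => P.eval t * Real.exp (-b * t ^ 2)) := by
  induction P using Polynomial.induction_on' with
  | add p q hp hq =>
    refine (hp.add hq).congr (Filter.Eventually.of_forall fun t => ?_)
    simp [add_mul]
  | monomial n a =>
    have h := (integrable_rpow_mul_exp_neg_mul_sq hb (s := (n : ℝ))
      (by have : (0 : ℝ) ≤ n := Nat.cast_nonneg n
          linarith)).const_mul a
    refine h.congr (Filter.Eventually.of_forall fun t => ?_)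
    simp [mul_assoc]

/-- real Hermite polynomial -/
def H (n : ℕ) : ℝ[X] := (hermite n).map (Int.castRingHom ℝ)

lemma aeval_eq (n : ℕ) (t : ℝ) : aeval t (hermite n) = (H n).eval t := by
  rw [H, eval_map, aeval_def]; rfl

lemma H_succ (n : ℕ) : H (n + 1) = X * H n - derivative (H n) := by
  simp [H, hermite_succ, derivative_map]

lemma H_zero : H 0 = 1 := by simp [H]

lemma H_monic (n : ℕ) : (H n).Monic := (hermite_monic n).map _

lemma H_natDegree (n : ℕ) : (H n).natDegree = n := by
  rw [H, (hermite_monic n).natDegree_map, natDegree_hermite]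

lemma ibp (P Q : ℝ[X]) :
    ∫ t : ℝ, (P * (X * Q - derivative Q)).eval t * Real.exp (-(1/2) * t ^ 2)
      = ∫ t : ℝ, (derivative P * Q).eval t * Real.exp (-(1/2) * t ^ 2) := by
  have hb : (0 : ℝ) < 1/2 := by norm_num
  rw [← sub_eq_zero, ← integral_sub (integrable_poly _ hb) (integrable_poly _ hb)]
  have hd : ∀ t : ℝ, HasDerivAt (fun t : ℝ => -((P * Q).eval t * Real.exp (-(1/2) * t ^ 2)))
      ((P * (X * Q - derivative Q)).eval t * Real.exp (-(1/2) * t ^ 2)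
        - (derivative P * Q).eval t * Real.exp (-(1/2) * t ^ 2)) t := by
    intro t
    have h1 := (P * Q).hasDerivAt t
    have h2 : HasDerivAt (fun t : ℝ => Real.exp (-(1/2) * t ^ 2))
        (Real.exp (-(1/2) * t ^ 2) * (-(1/2) * (2 * t))) t := by
      have := ((hasDerivAt_pow 2 t).const_mul (-(1/2) : ℝ)).exp
      simpa using this
    refine (h1.mul h2).neg.congr_deriv ?_
    simp only [derivative_mul, eval_add, eval_mul, eval_sub, eval_X]
    ring
  exact integral_eq_zero_of_hasDerivAt_of_integrable hd
    ((integrable_poly _ hb).sub (integrable_poly _ hb)) (integrable_poly _ hb).neg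

lemma iter (n : ℕ) (P : ℝ[X]) :
    ∫ t : ℝ, (P * H n).eval t * Real.exp (-(1/2) * t ^ 2)
      = ∫ t : ℝ, (derivative^[n] P).eval t * Real.exp (-(1/2) * t ^ 2) := by
  induction n generalizing P with
  | zero => simp [H_zero]
  | succ n ih =>
    rw [H_succ, ibp, ih, Function.iterate_succ_apply]

lemma orth_lt {m n : ℕ} (h : m < n) :
    ∫ t : ℝ, (H m * H n).eval t * Real.exp (-(1/2) * t ^ 2) = 0 := by
  rw [iter, iterate_derivative_eq_zero (by rwa [H_natDegree])]
  simp

lemma orth_ne {m n : ℕ} (h : m ≠ n) :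
    ∫ t : ℝ, (H m * H n).eval t * Real.exp (-(1/2) * t ^ 2) = 0 := by
  rcases lt_or_gt_of_ne h with h | h
  · exact orth_lt h
  · rw [mul_comm]; exact orth_lt h

lemma orth_self (n : ℕ) :
    ∫ t : ℝ, (H n * H n).eval t * Real.exp (-(1/2) * t ^ 2) = n ! * √(2 * Real.pi) := by
  have : derivative^[n] (H n) = C (n ! : ℝ) := by
    rw [eq_C_of_natDegree_le_zero
      ((natDegree_iterate_derivative (H n) n).trans (by rw [H_natDegree]; simp))]
    rw [coeff_iterate_derivative]
    have := (H_monic n).coeff_natDegree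
    rw [H_natDegree] at this
    simp [this, Nat.descFactorial_self]
  rw [iter, this]
  simp only [eval_C]
  rw [integral_const_mul, integral_gaussian]
  congr 2
  ring

lemma memLp_poly (P : ℝ[X]) :
    MemLp (fun t : ℝ => P.eval t * Real.exp (-(1/4) * t ^ 2)) 2 := by
  rw [memLp_two_iff_integrable_sq (by fun_prop)]
  refine (integrable_poly (P ^ 2) (b := 1/2) (by norm_num)).congr
    (Filter.Eventually.of_forall fun t => ?_)
  simp only [eval_pow, mul_pow, ← Real.exp_nat_mul]
  congr 2
  push_cast; ring

/-- Fourier uniqueness for integrable functions. -/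
lemma ae_zero_of_fourier {g : ℝ → ℂ} (hg : Integrable g)
    (h : ∀ ξ : ℝ, FourierTransform.fourier g ξ = 0) : ∀ᵐ t, g t = 0 := by
  refine ae_eq_zero_of_integral_contDiff_smul_eq_zero hg.locallyIntegrable ?_
  intro phi hphi hc
  have hc' : HasCompactSupport (fun x => (phi x : ℂ)) := hc.comp_left (g := Complex.ofReal) (by simp)
  have hphi' : ContDiff ℝ (↑(⊤ : ℕ∞)) (fun x => (phi x : ℂ)) := Complex.ofRealCLM.contDiff.comp hphi
  let Phi : SchwartzMap ℝ ℂ := hc'.toSchwartzMap hphi'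
  let Psi : SchwartzMap ℝ ℂ := FourierTransformInv.fourierInv Phi
  have hPsi : FourierTransform.fourier (Psi : ℝ → ℂ) = fun x => (phi x : ℂ) := by
    have : FourierTransform.fourier Psi = Phi := FourierTransform.fourier_fourierInv_eq Phi
    rw [← SchwartzMap.fourier_coe, this]; rfl
  have key := VectorFourier.integral_fourierIntegral_smul_eq_flip (L := innerₗ ℝ)
    (μ := volume) (ν := volume) (e := Real.fourierChar) (f := g) (g := (Psi : ℝ → ℂ))
    Real.continuous_fourierChar continuous_inner hg Psi.integrable
  have e1 : VectorFourier.fourierIntegral Real.fourierChar volume (innerₗ ℝ) g = 0 := by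
    funext ξ; exact h ξ
  have e2 : VectorFourier.fourierIntegral Real.fourierChar volume (innerₗ ℝ).flip (Psi : ℝ → ℂ)
      = fun x => (phi x : ℂ) := by
    rw [flip_innerₗ]; exact hPsi
  rw [e1, e2] at key
  simp only [Pi.zero_apply, zero_smul, integral_zero] at key
  rw [key]
  congr 1; funext x
  simp [mul_comm]

lemma real_exp_hasSum (x : ℝ) : HasSum (fun n : ℕ => x ^ n / (n ! : ℝ)) (Real.exp x) := by
  rw [Real.exp_eq_exp_ℝ]
  exact NormedSpace.expSeries_div_hasSum_exp x

lemma complex_exp_hasSum (x : ℂ) : HasSum (fun n : ℕ => x ^ n / (n ! : ℂ)) (Complex.exp x) := by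
  rw [Complex.exp_eq_exp_ℂ]
  exact NormedSpace.expSeries_div_hasSum_exp x

/-- Completeness, via moments. -/
lemma complete_moments {f : ℝ → ℝ} (hf : MemLp f 2)
    (h : ∀ n : ℕ, ∫ t : ℝ, f t * (t ^ n * Real.exp (-(1/4) * t ^ 2)) = 0) :
    ∀ᵐ t, f t = 0 := by
  have hint : ∀ c : ℝ, Integrable (fun t : ℝ => Real.exp |c * t| *
      ‖f t * Real.exp (-(1/4) * t ^ 2)‖) := by
    intro c
    have h1 : MemLp (fun t : ℝ => Real.exp (|c * t|) * Real.exp (-(1/4) * t ^ 2)) 2 := by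
      rw [memLp_two_iff_integrable_sq (by fun_prop)]
      have h0 : Integrable (fun t : ℝ => Real.exp (4 * c ^ 2) * Real.exp (-(1/4) * t ^ 2)) :=
        (integrable_exp_neg_mul_sq (by norm_num)).const_mul _
      refine h0.mono' (by fun_prop) (Filter.Eventually.of_forall fun t => ?_)
      rw [Real.norm_of_nonneg (by positivity), ← Real.exp_add, ← Real.exp_add, ← Real.exp_nat_mul]
      apply Real.exp_le_exp.2
      rcases abs_cases (c * t) with ⟨h, _⟩ | ⟨h, _⟩ <;> rw [h] <;> push_cast <;>
        nlinarith [sq_nonneg (2 * c - t / 2), sq_nonneg (2 * c + t / 2)]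
    refine (hf.integrable_mul h1).norm.congr (Filter.Eventually.of_forall fun t => ?_)
    simp only [Pi.mul_apply, norm_mul, Real.norm_eq_abs, Real.abs_exp]
    ring
  let g : ℝ → ℂ := fun t => ((f t * Real.exp (-(1/4) * t ^ 2) : ℝ) : ℂ)
  have hgm : AEStronglyMeasurable g := by
    have := hf.1
    have h2 : AEStronglyMeasurable (fun t : ℝ => f t * Real.exp (-(1/4) * t ^ 2)) :=
      this.mul (by fun_prop)
    exact Complex.continuous_ofReal.comp_aestronglyMeasurable h2
  have hgi : Integrable g := by
    refine (hint 0).mono' hgm (Filter.Eventually.of_forall fun t => ?_)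
    simp only [g, Complex.norm_real]
    simp
  have hF : ∀ ξ : ℝ, FourierTransform.fourier g ξ = 0 := by
    intro ξ
    rw [Real.fourier_real_eq_integral_exp_smul]
    have hs := hasSum_integral_of_dominated_convergence (μ := volume)
      (F := fun (n : ℕ) (t : ℝ) => ((-2 * Real.pi * t * ξ : ℝ) * Complex.I) ^ n / (n ! : ℂ) * g t)
      (f := fun t => Complex.exp ((-2 * Real.pi * t * ξ : ℝ) * Complex.I) • g t)
      (fun n t => |(2 * Real.pi * ξ) * t| ^ n / n ! * ‖f t * Real.exp (-(1/4) * t ^ 2)‖)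
      (fun n => by
        apply AEStronglyMeasurable.mul _ hgm
        exact Continuous.aestronglyMeasurable (by fun_prop))
      (fun n => Filter.Eventually.of_forall fun t => by
        simp only [g, norm_mul, norm_div, norm_pow, Complex.norm_real, Complex.norm_I,
          Complex.norm_natCast, Real.norm_eq_abs, abs_neg, abs_mul, mul_one]
        apply le_of_eq; ring)
      (Filter.Eventually.of_forall fun t =>
        (Real.summable_pow_div_factorial _).mul_right _)
      (by
        refine (hint (2 * Real.pi * ξ)).congr (Filter.Eventually.of_forall fun t => ?_)
        exact (((real_exp_hasSum _).mul_right _).tsum_eq).symm)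
      (Filter.Eventually.of_forall fun t => by
        exact (complex_exp_hasSum _).mul_right _)
    have hz : ∀ n : ℕ, ∫ t : ℝ, ((-2 * Real.pi * t * ξ : ℝ) * Complex.I) ^ n / (n ! : ℂ) * g t
        = 0 := by
      intro n
      have : ∀ t : ℝ, ((-2 * Real.pi * t * ξ : ℝ) * Complex.I) ^ n / (n ! : ℂ) * g t
          = ((-2 * Real.pi * ξ) * Complex.I) ^ n / (n ! : ℂ) *
            ((f t * (t ^ n * Real.exp (-(1/4) * t ^ 2)) : ℝ) : ℂ) := by
        intro t
        simp only [g]; push_cast; ring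
      simp_rw [this]
      rw [integral_const_mul, integral_complex_ofReal, h n]
      simp
    simp only [hz] at hs
    exact hs.unique hasSum_zero
  filter_upwards [ae_zero_of_fourier hgi hF] with t ht
  simpa [g] using ht

lemma complete {f : ℝ → ℝ} (hf : MemLp f 2)
    (h : ∀ n : ℕ, ∫ t : ℝ, f t * ((H n).eval t * Real.exp (-(1/4) * t ^ 2)) = 0) :
    ∀ᵐ t, f t = 0 := by
  have hi : ∀ P : ℝ[X], Integrable (fun t : ℝ => f t * (P.eval t * Real.exp (-(1/4) * t ^ 2))) :=
    fun P => hf.integrable_mul (memLp_poly P)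
  have key : ∀ n : ℕ, ∀ P : ℝ[X], P.degree < n →
      ∫ t : ℝ, f t * (P.eval t * Real.exp (-(1/4) * t ^ 2)) = 0 := by
    intro n
    induction n with
    | zero =>
      intro P hP
      have : P = 0 := by simpa using hP
      simp [this]
    | succ n ih =>
      intro P hP
      have hQ : (P - C (P.coeff n) * H n).degree < n := by
        rw [degree_lt_iff_coeff_zero] at hP ⊢
        intro m hm
        have hmon := (H_monic n).coeff_natDegree
        rw [H_natDegree] at hmon
        rcases hm.eq_or_lt with rfl | hm
        · simp [hmon]
        · have : (H n).coeff m = 0 := coeff_eq_zero_of_natDegree_lt (by rwa [H_natDegree])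
          simp [this, hP m hm]
      have := ih _ hQ
      have e : ∀ t : ℝ, f t * (P.eval t * Real.exp (-(1/4) * t ^ 2)) =
          f t * ((P - C (P.coeff n) * H n).eval t * Real.exp (-(1/4) * t ^ 2))
          + P.coeff n * (f t * ((H n).eval t * Real.exp (-(1/4) * t ^ 2))) := by
        intro t; simp; ring
      simp_rw [e]
      rw [integral_add (hi _) ((hi _).const_mul _), integral_const_mul, h n, this]
      simp
  refine complete_moments hf fun n => ?_
  have := key (n + 1) (X ^ n) (by rw [degree_X_pow]; exact_mod_cast Nat.lt_succ_self n)
  simpa using this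

/-- normalisation -/
def c (n : ℕ) : ℝ := (√(√(2 * Real.pi) * n !))⁻¹

lemma c_mul (x y : ℕ) : c x * c y = (√(2 * Real.pi * (x ! : ℝ) * (y ! : ℝ)))⁻¹ := by
  have hp : (0 : ℝ) ≤ 2 * Real.pi := by positivity
  rw [c, c, ← mul_inv, ← Real.sqrt_mul (by positivity)]
  congr 2
  calc √(2 * Real.pi) * x ! * (√(2 * Real.pi) * y !)
      = (√(2 * Real.pi) * √(2 * Real.pi)) * x ! * y ! := by ring
    _ = _ := by rw [Real.mul_self_sqrt hp]

def phi (n : ℕ) (t : ℝ) : ℝ := (C (c n) * H n).eval t * Real.exp (-(1/4) * t ^ 2)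

lemma phi_memLp (n : ℕ) : MemLp (phi n) 2 := memLp_poly _

lemma phi_mul (x y : ℕ) (t : ℝ) : phi x t * phi y t =
    c x * c y * ((H x * H y).eval t * Real.exp (-(1/2) * t ^ 2)) := by
  have : Real.exp (-(1/2) * t ^ 2) = Real.exp (-(1/4) * t ^ 2) * Real.exp (-(1/4) * t ^ 2) := by
    rw [← Real.exp_add]; congr 1; ring
  simp only [phi, this, eval_mul, eval_C]; ring

lemma K_eq (s : ℝ) (x y : ℕ) :
    discreteHermiteKernel s x y = ∫ t in Set.Ioi s, phi x t * phi y t := by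
  simp_rw [phi_mul]
  rw [integral_const_mul, c_mul, discreteHermiteKernel]
  congr 2; funext t
  rw [aeval_eq, aeval_eq, eval_mul, show -t ^ 2 / 2 = -(1/2) * t ^ 2 by ring]
  ring

lemma phi_orth (x y : ℕ) : ∫ t, phi x t * phi y t = if x = y then 1 else 0 := by
  simp_rw [phi_mul]
  rw [integral_const_mul]
  split_ifs with h
  · subst h
    rw [orth_self, c, ← mul_inv, Real.mul_self_sqrt (by positivity), mul_comm (√_)]
    exact inv_mul_cancel₀ (by positivity)
  · rw [orth_ne h, mul_zero]

/-- L² vector -/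
def v (n : ℕ) : Lp ℝ 2 (volume : Measure ℝ) := (phi_memLp n).toLp _

def w (s : ℝ) (n : ℕ) : Lp ℝ 2 (volume : Measure ℝ) :=
  ((phi_memLp n).indicator (measurableSet_Ioi (a := s))).toLp _

lemma inner_toLp {f g : ℝ → ℝ} (hf : MemLp f 2) (hg : MemLp g 2) :
    inner ℝ (hf.toLp f) (hg.toLp g) = ∫ t, f t * g t := by
  rw [L2.inner_def]
  apply integral_congr_ae
  filter_upwards [hf.coeFn_toLp, hg.coeFn_toLp] with t h1 h2
  rw [h1, h2]; simp [mul_comm]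

lemma inner_w_v (s : ℝ) (x y : ℕ) : inner ℝ (w s x) (v y) = discreteHermiteKernel s x y := by
  rw [w, v, inner_toLp, K_eq, ← integral_indicator measurableSet_Ioi]
  congr 1; funext t
  by_cases h : t ∈ Set.Ioi s <;> simp [Set.indicator, h]

lemma inner_w_w (s : ℝ) (x y : ℕ) : inner ℝ (w s x) (w s y) = discreteHermiteKernel s x y := by
  rw [w, w, inner_toLp, K_eq, ← integral_indicator measurableSet_Ioi]
  congr 1; funext t
  by_cases h : t ∈ Set.Ioi s <;> simp [Set.indicator, h]

lemma v_orthonormal : Orthonormal ℝ v := by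
  rw [orthonormal_iff_ite]
  intro x y
  rw [v, v, inner_toLp, phi_orth]

lemma c_ne (n : ℕ) : c n ≠ 0 := by
  rw [c]; positivity

lemma v_complete : (Submodule.span ℝ (Set.range v))ᗮ = ⊥ := by
  rw [Submodule.eq_bot_iff]
  intro f hf
  rw [Submodule.mem_orthogonal] at hf
  have h0 : ∀ᵐ t, (f : ℝ → ℝ) t = 0 := by
    refine complete (Lp.memLp f) fun n => ?_
    have h1 := hf (v n) (Submodule.subset_span ⟨n, rfl⟩)
    rw [← Lp.toLp_coeFn f (Lp.memLp f), v, inner_toLp] at h1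
    have e : ∀ t, phi n t * f t = c n * (f t * ((H n).eval t * Real.exp (-(1/4) * t ^ 2))) := by
      intro t; simp only [phi, eval_mul, eval_C]; ring
    simp_rw [e] at h1
    rw [integral_const_mul] at h1
    exact (mul_eq_zero.1 h1).resolve_left (c_ne n)
  exact (Lp.eq_zero_iff_ae_eq_zero).2 h0

def basis : HilbertBasis ℕ ℝ (Lp ℝ 2 (volume : Measure ℝ)) :=
  HilbertBasis.mkOfOrthogonalEqBot v_orthonormal v_complete

lemma basis_apply (n : ℕ) : basis n = v n := by
  rw [basis, HilbertBasis.coe_mkOfOrthogonalEqBot]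

lemma symm (s : ℝ) (x y : ℕ) : discreteHermiteKernel s x y = discreteHermiteKernel s y x := by
  rw [← inner_w_w, ← inner_w_w, real_inner_comm]

lemma hasSum (s : ℝ) (x y : ℕ) :
    HasSum (fun z : ℕ => discreteHermiteKernel s x z * discreteHermiteKernel s z y)
      (discreteHermiteKernel s x y) := by
  have := basis.hasSum_inner_mul_inner (w s x) (w s y)
  rw [inner_w_w] at this
  refine this.congr_fun ?_
  intro z
  rw [basis_apply, inner_w_v, real_inner_comm, inner_w_v, symm s z y]

lemma diag_le (s : ℝ) (x : ℕ) : discreteHermiteKernel s x x ≤ 1 := by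
  have h1 := phi_orth x x
  rw [if_pos rfl] at h1
  rw [K_eq, ← h1]
  exact setIntegral_le_integral ((phi_memLp x).integrable_mul (phi_memLp x))
    (Filter.Eventually.of_forall fun t => mul_self_nonneg _)

end DHK

theorem discreteHermiteKernel_isProjectionKernel (s : ℝ) :
    (∀ x y : ℕ, discreteHermiteKernel s x y = discreteHermiteKernel s y x)
    ∧ (∀ x y : ℕ, Summable (fun z : ℕ => |discreteHermiteKernel s x z * discreteHermiteKernel s z y|)
        ∧ ∑' z : ℕ, discreteHermiteKernel s x z * discreteHermiteKernel s z y
            = discreteHermiteKernel s x y)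
    ∧ (∀ x : ℕ, 0 ≤ discreteHermiteKernel s x x ∧ discreteHermiteKernel s x x ≤ 1) := by
  refine ⟨DHK.symm s, fun x y => ⟨(DHK.hasSum s x y).summable.abs, (DHK.hasSum s x y).tsum_eq⟩,
    fun x => ⟨?_, DHK.diag_le s x⟩⟩
  rw [← DHK.inner_w_w]
  exact real_inner_self_nonneg

end
end

section
/- Fix s ∈ ℝ and let θ : ℕ → (0, ∞) satisfy (θ(N) − N)/√N → s as N → ∞. Then for every pair x, y ∈ ℕ, the Charlier kernel converges pointwise to the discrete Hermite kernel: lim_{N→∞} Σ_{m=0}^{N−1} C̃_m(x;θ(N))·C̃_m(y;θ(N)) = K_s(x,y). -/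
open Filter
open scoped Nat Topology

noncomputable section

/-- The Charlier polynomial of degree `m` with parameter `θ`, evaluated at `x ∈ ℕ`:
`C_m(x;θ) = Σ_{k=0}^m (−1)^k·(m choose k)·(x choose k)·k!·θ^{−k}`. -/
def charlier (θ : ℝ) (m x : ℕ) : ℝ :=
  ∑ k ∈ Finset.range (m + 1),
    (-1 : ℝ) ^ k * (m.choose k : ℝ) * (x.choose k : ℝ) * (k ! : ℝ) / θ ^ k

/-- The normalized Charlier function
`C̃_m(x;θ) = e^{−θ/2}·θ^{(x+m)/2}·(x!·m!)^{−1/2}·C_m(x;θ)`. -/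
def normalizedCharlier (θ : ℝ) (m x : ℕ) : ℝ :=
  Real.exp (-θ / 2) * Real.sqrt (θ ^ (x + m)) / Real.sqrt ((x ! : ℝ) * (m ! : ℝ)) *
    charlier θ m x

/-- The Charlier kernel `K^{ch}_{N,θ}(x,y) = Σ_{m=0}^{N−1} C̃_m(x;θ)·C̃_m(y;θ)`. -/
def charlierKernel (N : ℕ) (θ : ℝ) (x y : ℕ) : ℝ :=
  ∑ m ∈ Finset.range N, normalizedCharlier θ m x * normalizedCharlier θ m y

lemma charlier_eq_range (θ : ℝ) (m x K : ℕ) (hK : m + 1 ≤ K) :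
    charlier θ m x = ∑ k ∈ Finset.range K,
      (-1 : ℝ) ^ k * (m.choose k : ℝ) * (x.choose k : ℝ) * (k ! : ℝ) / θ ^ k := by
  unfold charlier
  apply Finset.sum_subset
  · intro k hk
    simp only [Finset.mem_range] at *
    omega
  · intro k _ hk
    simp only [Finset.mem_range] at hk
    rw [Nat.choose_eq_zero_of_lt (show m < k by omega)]
    simp

lemma charlier_symm (θ : ℝ) (m x : ℕ) : charlier θ m x = charlier θ x m := by
  rw [charlier_eq_range θ m x (m + x + 1) (by omega),
    charlier_eq_range θ x m (m + x + 1) (by omega)]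
  apply Finset.sum_congr rfl
  intro k _
  ring

lemma charlier_zero_left (θ : ℝ) (x : ℕ) : charlier θ 0 x = 1 := by
  simp [charlier]

lemma charlier_zero_right (θ : ℝ) (x : ℕ) : charlier θ x 0 = 1 := by
  rw [charlier_symm, charlier_zero_left]

lemma charlier_D (θ : ℝ) (m x : ℕ) :
    charlier θ (m + 1) x = charlier θ m x - x / θ * charlier θ m (x - 1) := by
  rcases x with _ | x
  · simp [charlier_zero_right]
  rw [charlier_eq_range θ m (x+1) (m + 1 + 1) (by omega), charlier,
    Finset.sum_range_succ', Finset.sum_range_succ' _ (m+1), charlier, Finset.mul_sum]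
  have : ∀ a b c d : ℝ, a = b - c → a + d = b + d - c := by intros; linarith
  simp only [Nat.choose_zero_right]
  apply this
  rw [← Finset.sum_sub_distrib]
  apply Finset.sum_congr rfl
  intro k _
  have h1 : ((m+1).choose (k+1) : ℝ) = m.choose k + m.choose (k+1) := by
    rw [Nat.choose_succ_succ]; push_cast; ring
  have h2 : ((x+1).choose (k+1) : ℝ) * (k+1) = (x + 1) * x.choose k := by
    have := Nat.add_one_mul_choose_eq x k
    exact_mod_cast this.symm
  rw [h1, Nat.factorial_succ]
  simp only [Nat.add_sub_cancel]
  push_cast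
  have h3 : ((-1:ℝ)) ^ (k + 1) * (m.choose k + m.choose (k+1)) * ((x+1).choose (k+1)) *
      ((k+1) * k !) = (-1:ℝ) ^ (k + 1) * m.choose (k+1) * ((x+1).choose (k+1)) * ((k+1) * k !)
       - (-1)^k * m.choose k * k ! * ((x + 1) * x.choose k) := by
    rw [← h2]; ring
  rw [h3, sub_div]
  congr 1
  rw [div_mul_div_comm, ← pow_succ']
  congr 1
  ring

lemma charlier_D' (θ : ℝ) (m x : ℕ) :
    charlier θ m (x + 1) = charlier θ m x - m / θ * charlier θ (m - 1) x := by
  rw [charlier_symm, charlier_D, charlier_symm θ x m, charlier_symm θ x (m-1)]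

/-- three term in `m` -/
lemma charlier_three (θ : ℝ) (hθ : θ ≠ 0) (m x : ℕ) :
    θ * charlier θ (m + 1) x = (m + θ - x) * charlier θ m x - m * charlier θ (m - 1) x := by
  rcases x with _ | x
  · simp [charlier_zero_right]
  rcases m with _ | m
  · rw [charlier_D]; simp [charlier_zero_left]; field_simp; 
  have h1 := charlier_D θ (m+1) (x+1)
  have h2 := charlier_D' θ (m+1) x
  have h3 := charlier_D θ m (x+1)
  simp only [Nat.add_sub_cancel] at *
  push_cast at *
  field_simp at h1 h2 h3
  apply mul_left_cancel₀ hθ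
  linear_combination θ * h1 + (x+1) * h2 - (m+1) * h3

lemma charlier_three' (θ : ℝ) (hθ : θ ≠ 0) (m x : ℕ) :
    θ * charlier θ m (x + 1) = (x + θ - m) * charlier θ m x - x * charlier θ m (x - 1) := by
  rw [charlier_symm, charlier_three θ hθ, charlier_symm θ x m, charlier_symm θ (x-1) m]

lemma charlier_hasDerivAt (θ : ℝ) (hθ : θ ≠ 0) (m x : ℕ) :
    HasDerivAt (fun t => charlier t m x) (m * x / θ ^ 2 * charlier θ (m - 1) (x - 1)) θ := by
  induction m generalizing x with
  | zero => simpa [charlier_zero_left] using hasDerivAt_const θ (1:ℝ)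
  | succ m ih =>
    have e : (fun t => charlier t (m+1) x) =
        fun t => charlier t m x - x / t * charlier t m (x - 1) := by
      funext t; exact charlier_D t m x
    rw [e]
    have h := (ih x).sub (((hasDerivAt_const θ (x:ℝ)).div (hasDerivAt_id θ) hθ).mul (ih (x-1)))
    refine h.congr_deriv ?_
    simp only [Nat.add_sub_cancel, id]
    rcases x with _ | x
    · simp
    rcases m with _ | m
    · simp [charlier_zero_left]
      ring
    simp only [Nat.add_sub_cancel, Pi.div_apply, id]
    rw [charlier_D θ m x]
    push_cast
    field_simp
    ring

/-- the charlier derivative in the form used -/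
lemma charlier_hasDerivAt' (θ : ℝ) (hθ : θ ≠ 0) (m x : ℕ) :
    HasDerivAt (fun t => charlier t m x)
      (-(m / θ) * (charlier θ m x - charlier θ (m - 1) x)) θ := by
  refine (charlier_hasDerivAt θ hθ m x).congr_deriv ?_
  rcases m with _ | m
  · simp
  rw [charlier_D]
  simp only [Nat.add_sub_cancel]
  field_simp
  ring

/-- half-power scaled Charlier -/
def hC (t : ℝ) (m x : ℕ) : ℝ := Real.sqrt t ^ x * charlier t m x

/-- Poisson weight -/
def pw (N : ℕ) (t : ℝ) : ℝ := Real.exp (-t) * t ^ N / (N ! : ℝ)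

def TT (x y N : ℕ) (t : ℝ) : ℝ :=
  pw N t * (N / t) * (hC t N x * hC t (N - 1) y + hC t (N - 1) x * hC t N y)

lemma sqrt_pow_hasDerivAt (t : ℝ) (ht : 0 < t) (x : ℕ) :
    HasDerivAt (fun t => Real.sqrt t ^ x) (x / (2 * t) * Real.sqrt t ^ x) t := by
  have h := (Real.hasDerivAt_sqrt ht.ne').pow x
  refine h.congr_deriv ?_
  rcases x with _ | x
  · simp
  have := Real.sq_sqrt ht.le
  have h2 : Real.sqrt t ≠ 0 := (Real.sqrt_pos.2 ht).ne'
  simp only [Nat.add_sub_cancel, pow_succ]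
  have h3 : (x + 1 : ℕ) / (2 * t) = ((x + 1 : ℕ) : ℝ) / (2 * (Real.sqrt t ^ 2)) := by rw [this]
  rw [h3]
  field_simp

lemma pw_hasDerivAt (t : ℝ) (ht : 0 < t) (m : ℕ) :
    HasDerivAt (fun t => pw m t) (pw m t * (m / t - 1)) t := by
  unfold pw
  have h := (((hasDerivAt_id t).neg.exp).mul ((hasDerivAt_id t).pow m)).div_const (m ! : ℝ)
  refine h.congr_deriv ?_
  rcases m with _ | m
  · simp
  simp
  field_simp
  ring

lemma hC_hasDerivAt (t : ℝ) (ht : 0 < t) (m x : ℕ) :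
    HasDerivAt (fun t => hC t m x) (x / (2 * t) * hC t m x - (m / t) * (hC t m x - hC t (m-1) x)) t := by
  unfold hC
  have h := (sqrt_pow_hasDerivAt t ht x).mul (charlier_hasDerivAt' t ht.ne' m x)
  refine h.congr_deriv ?_
  ring

lemma hC_three (t : ℝ) (ht : 0 < t) (m x : ℕ) :
    t * hC t (m + 1) x = (m + t - x) * hC t m x - m * hC t (m - 1) x := by
  unfold hC
  linear_combination (Real.sqrt t ^ x) * charlier_three t ht.ne' m x

lemma pw_succ (t : ℝ) (m : ℕ) : pw (m + 1) t * (m + 1) = pw m t * t := by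
  unfold pw
  rw [Nat.factorial_succ]
  have : (m ! : ℝ) ≠ 0 := by positivity
  push_cast
  field_simp
  ring

lemma kernel_hasDerivAt (t : ℝ) (ht : 0 < t) (x y N : ℕ) :
    HasDerivAt (fun t => ∑ m ∈ Finset.range N, pw m t * (hC t m x * hC t m y))
      (-(1 / 2) * TT x y N t) t := by
  induction N with
  | zero => simpa [TT] using hasDerivAt_const t (0:ℝ)
  | succ N ih =>
    simp only [Finset.sum_range_succ]
    have h := ih.add ((pw_hasDerivAt t ht N).mul
      ((hC_hasDerivAt t ht N x).mul (hC_hasDerivAt t ht N y)))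
    refine h.congr_deriv ?_
    have hx := hC_three t ht N x
    have hy := hC_three t ht N y
    have hp := pw_succ t N
    unfold TT
    simp only [Nat.add_sub_cancel]
    have e : pw (N+1) t * (((N+1:ℕ):ℝ) / t) = pw N t := by
      push_cast
      field_simp
      linarith
    rw [e]
    have ex : hC t (N+1) x = ((N + t - x) * hC t N x - N * hC t (N - 1) x) / t := by
      rw [← hx]; field_simp
    have ey : hC t (N+1) y = ((N + t - y) * hC t N y - N * hC t (N - 1) y) / t := by
      rw [← hy]; field_simp
    rw [ex, ey]
    simp only [Pi.mul_apply]
    field_simp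
    ring

lemma kernel_eq (t : ℝ) (ht : 0 < t) (x y N : ℕ) :
    charlierKernel N t x y = (Real.sqrt (x ! * y ! : ℝ))⁻¹ *
      ∑ m ∈ Finset.range N, pw m t * (hC t m x * hC t m y) := by
  unfold charlierKernel
  rw [Finset.mul_sum]
  apply Finset.sum_congr rfl
  intro m _
  unfold normalizedCharlier pw hC
  have h1 : Real.exp (-t) = Real.exp (-t/2) * Real.exp (-t/2) := by
    rw [← Real.exp_add]; ring_nf
  have e : ∀ n, Real.sqrt (t ^ n) = Real.sqrt t ^ n := by
    intro n
    rw [Real.sqrt_eq_iff_mul_self_eq (by positivity) (by positivity), ← mul_pow, Real.mul_self_sqrt ht.le]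
  rw [h1, e, e, Real.sqrt_mul (by positivity), Real.sqrt_mul (by positivity),
    Real.sqrt_mul (by positivity)]
  have h2 : t ^ m = Real.sqrt t ^ m * Real.sqrt t ^ m := by
    rw [← mul_pow, Real.mul_self_sqrt ht.le]
  have h3 : (m ! : ℝ) = Real.sqrt (m !) * Real.sqrt (m !) :=
    (Real.mul_self_sqrt (by positivity)).symm
  rw [h2]
  rw [show Real.exp (-t / 2) * Real.exp (-t / 2) * (Real.sqrt t ^ m * Real.sqrt t ^ m) / (m ! : ℝ) = Real.exp (-t / 2) * Real.exp (-t / 2) * (Real.sqrt t ^ m * Real.sqrt t ^ m) / (Real.sqrt (m !) * Real.sqrt (m !)) from by rw [← h3]]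
  have p1 : Real.sqrt (m ! : ℝ) ≠ 0 := by positivity
  have p2 : Real.sqrt (x ! : ℝ) ≠ 0 := by positivity
  have p3 : Real.sqrt (y ! : ℝ) ≠ 0 := by positivity
  field_simp
  ring

def He (x : ℕ) (u : ℝ) : ℝ := Polynomial.aeval u (Polynomial.hermite x)

lemma deriv_hermite (n : ℕ) : Polynomial.derivative (Polynomial.hermite (n + 1)) =
    (n + 1 : ℕ) * Polynomial.hermite n := by
  induction n with
  | zero => simp [Polynomial.hermite_succ]
  | succ n ih =>
    rw [Polynomial.hermite_succ (n+1), Polynomial.derivative_sub, Polynomial.derivative_mul, ih,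
      Polynomial.derivative_mul, Polynomial.derivative_natCast, Polynomial.derivative_X]
    rw [Polynomial.hermite_succ n]
    push_cast
    ring

lemma He_zero (u : ℝ) : He 0 u = 1 := by simp [He]

lemma He_succ (x : ℕ) (u : ℝ) : He (x + 1) u = u * He x u - x * He (x - 1) u := by
  unfold He
  rw [Polynomial.hermite_succ]
  rcases x with _ | x
  · simp
  rw [deriv_hermite]
  simp

lemma He_continuous (x : ℕ) : Continuous (He x) := by
  unfold He
  exact Polynomial.continuous_aeval _

lemma hC_zero (t : ℝ) (m : ℕ) : hC t m 0 = 1 := by simp [hC, charlier_zero_right]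

lemma hC_succ (t : ℝ) (ht : 0 < t) (m x : ℕ) :
    hC t m (x + 1) = (x / Real.sqrt t + (t - m) / Real.sqrt t) * hC t m x - x * hC t m (x - 1) := by
  have h := charlier_three' t ht.ne' m x
  have hs : Real.sqrt t ^ 2 = t := Real.sq_sqrt ht.le
  have h2 : Real.sqrt t ≠ 0 := (Real.sqrt_pos.2 ht).ne'
  unfold hC
  have e : charlier t m (x+1) = ((x + t - m) * charlier t m x - x * charlier t m (x - 1)) /
      (Real.sqrt t ^ 2) := by
    rw [← h, hs]; field_simp
  rw [e]
  rcases x with _ | x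
  · simp; field_simp
  simp only [Nat.add_sub_cancel]
  have : (((x + 1 : ℕ) : ℝ) + t - m) = (x+1:ℕ) + (t - m) := by ring
  rw [this]
  generalize t - (m:ℝ) = d
  field_simp
  ring

lemma hC_bound (t b : ℝ) (ht : 1 ≤ t) (hb : 1 ≤ b) (m : ℕ) (h : |t - m| ≤ b * Real.sqrt t) (x : ℕ) :
    |hC t m x| ≤ 2 ^ x * x ! * b ^ x := by
  have hs : 1 ≤ Real.sqrt t := by rw [Real.one_le_sqrt]; exact ht
  have hs0 : 0 < Real.sqrt t := by linarith
  have key : ∀ x : ℕ, |hC t m x| ≤ 2 ^ x * x ! * b ^ x ∧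
      |hC t m (x + 1)| ≤ 2 ^ (x + 1) * (x + 1)! * b ^ (x + 1) := by
    have step : ∀ x : ℕ, ∀ B, |hC t m x| ≤ 2 ^ x * x ! * b ^ x → x * |hC t m (x - 1)| ≤ B →
        B ≤ 2 ^ x * (x + 1)! * b ^ (x + 1) →
        |hC t m (x + 1)| ≤ 2 ^ (x + 1) * (x + 1)! * b ^ (x + 1) := by
      intro x B h1 h2 h3
      rw [hC_succ t (by linarith)]
      have h4 : |(x / Real.sqrt t + (t - m) / Real.sqrt t)| ≤ (x + 1) * b := by
        calc _ ≤ |x / Real.sqrt t| + |(t - m) / Real.sqrt t| := abs_add_le _ _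
          _ ≤ x + b := by
            apply add_le_add
            · rw [abs_of_nonneg (by positivity)]
              exact div_le_self (by positivity) hs
            · rw [abs_div, abs_of_pos hs0, div_le_iff₀ hs0]; exact h
          _ ≤ (x + 1) * b := by
            have : (0:ℝ) ≤ x := by positivity
            nlinarith
      calc _ ≤ |(x / Real.sqrt t + (t - m) / Real.sqrt t) * hC t m x| + |x * hC t m (x - 1)| :=
            abs_sub _ _
        _ ≤ (x + 1) * b * (2 ^ x * x ! * b ^ x) + B := by
            rw [abs_mul, abs_mul]
            have : |(x:ℝ)| = x := abs_of_nonneg (by positivity)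
            rw [this]
            gcongr
        _ ≤ (x + 1) * b * (2 ^ x * x ! * b ^ x) + 2 ^ x * (x + 1)! * b ^ (x + 1) := by gcongr
        _ = _ := by rw [Nat.factorial_succ]; push_cast; ring
    intro x
    induction x with
    | zero =>
      refine ⟨by simp [hC_zero], step 0 0 (by simp [hC_zero]) (by simp) (by positivity)⟩
    | succ x ih =>
      refine ⟨ih.2, step (x+1) ((x+1:ℕ) * (2 ^ x * x ! * b ^ x)) ih.2 ?_ ?_⟩
      · simp only [Nat.add_sub_cancel]
        gcongr
        exact ih.1
      · rw [Nat.factorial_succ (x+1), Nat.factorial_succ x]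
        push_cast
        have e1 : (x:ℝ) + 1 ≤ (x + 1 + 1) * (x + 1) := by
          have : (0:ℝ) ≤ x := by positivity
          nlinarith
        have e2 : (2:ℝ) ^ x ≤ 2 ^ (x+1) := pow_le_pow_right₀ (by norm_num) (by omega)
        have e3 : b ^ x ≤ b ^ (x+1+1) := pow_le_pow_right₀ hb (by omega)
        calc ((x:ℝ)+1) * (2 ^ x * x ! * b ^ x) ≤ ((x + 1 + 1) * (x + 1)) * (2 ^ (x+1) * x ! * b ^ (x+1+1)) := by
              gcongr
          _ = _ := by ring
  exact (key x).1

lemma hC_tendsto (t : ℕ → ℝ) (m : ℕ → ℕ) (u : ℝ) (ht : ∀ᶠ N in atTop, 0 < t N)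
    (h1 : Tendsto (fun N => 1 / Real.sqrt (t N)) atTop (𝓝 0))
    (h2 : Tendsto (fun N => (t N - m N) / Real.sqrt (t N)) atTop (𝓝 u)) (x : ℕ) :
    Tendsto (fun N => hC (t N) (m N) x) atTop (𝓝 (He x u)) := by
  have step : ∀ x : ℕ, Tendsto (fun N => hC (t N) (m N) x) atTop (𝓝 (He x u)) →
      Tendsto (fun N => (x:ℝ) * hC (t N) (m N) (x-1)) atTop (𝓝 (x * He (x-1) u)) →
      Tendsto (fun N => hC (t N) (m N) (x+1)) atTop (𝓝 (He (x+1) u)) := by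
    intro x a b
    have := (((h1.const_mul (x:ℝ)).add h2).mul a).sub b
    rw [He_succ]
    rw [mul_zero, zero_add] at this
    refine this.congr' ?_
    filter_upwards [ht] with N hN
    rw [hC_succ _ hN]
    ring
  have key : ∀ x : ℕ, Tendsto (fun N => hC (t N) (m N) x) atTop (𝓝 (He x u)) ∧
      Tendsto (fun N => hC (t N) (m N) (x+1)) atTop (𝓝 (He (x+1) u)) := by
    intro x
    have z : Tendsto (fun N => hC (t N) (m N) 0) atTop (𝓝 (He 0 u)) := by
      simp only [hC_zero, He_zero]
      exact tendsto_const_nhds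
    induction x with
    | zero => exact ⟨z, step 0 z (by simp)⟩
    | succ x ih => exact ⟨ih.2, step (x+1) ih.2 (ih.1.const_mul _)⟩
  exact (key x).1

/-- `√N pw` factorized -/
lemma pw_eq (N : ℕ) (hN : 0 < N) (u : ℝ) (hu : 0 < 1 + u / Real.sqrt N) :
    Real.sqrt N * pw N (N + Real.sqrt N * u) = 1 / (Real.sqrt 2 * Stirling.stirlingSeq N) *
      Real.exp (N * Real.log (1 + u / Real.sqrt N) - Real.sqrt N * u) := by
  have hN' : (0:ℝ) < N := by exact_mod_cast hN
  have hs : 0 < Real.sqrt N := Real.sqrt_pos.2 hN'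
  have hss : Real.sqrt N * Real.sqrt N = N := Real.mul_self_sqrt hN'.le
  unfold pw Stirling.stirlingSeq
  have e1 : (N:ℝ) + Real.sqrt N * u = N * (1 + u / Real.sqrt N) := by
    have : (N:ℝ) * (u / Real.sqrt N) = Real.sqrt N * u := by
      nth_rw 1 [← hss]; field_simp
    rw [mul_add, this, mul_one]
  have e2 : Real.exp (N * Real.log (1 + u / Real.sqrt N)) = (1 + u / Real.sqrt N) ^ N := by
    rw [Real.exp_nat_mul, Real.exp_log hu]
  rw [Real.exp_sub, e2, neg_add, Real.exp_add, e1, mul_pow, div_pow, ← Real.exp_nat_mul, mul_one,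
    Real.sqrt_mul (by norm_num), Real.exp_neg, Real.exp_neg]
  have : (N ! : ℝ) ≠ 0 := by positivity
  have h2 : Real.sqrt 2 * Real.sqrt 2 = 2 := Real.mul_self_sqrt (by norm_num)
  generalize (1 + u / Real.sqrt N) ^ N = w
  field_simp

lemma stir_le (N : ℕ) (hN : 0 < N) : 1 / (Real.sqrt 2 * Stirling.stirlingSeq N) ≤ 1 ∧
    0 ≤ 1 / (Real.sqrt 2 * Stirling.stirlingSeq N) := by
  have h := Stirling.sqrt_pi_le_stirlingSeq hN.ne'
  have h1 : 1 ≤ Real.sqrt Real.pi := by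
    rw [Real.one_le_sqrt]; linarith [Real.pi_gt_three]
  have h2 : 1 ≤ Real.sqrt 2 := by rw [Real.one_le_sqrt]; norm_num
  have h3 : 1 ≤ Real.sqrt 2 * Stirling.stirlingSeq N := by nlinarith
  exact ⟨by rw [div_le_one (by linarith)]; exact h3, by positivity⟩

lemma log_upper (v : ℝ) (hv : 0 ≤ v) : Real.log (1 + v) ≤ v - v ^ 2 / (2 * (1 + v)) := by
  have hd : ∀ z ∈ Set.Ioi (-1:ℝ), HasDerivAt
      (fun z => z - z ^ 2 / (2 * (1 + z)) - Real.log (1 + z)) (z ^ 2 / (2 * (1 + z) ^ 2)) z := by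
    intro z hz
    have hz : 0 < 1 + z := by simp at hz; linarith
    have h1 : HasDerivAt (fun z : ℝ => 1 + z) 1 z := (hasDerivAt_id z).const_add 1
    have h := ((hasDerivAt_id z).sub (((hasDerivAt_id z).pow 2).div (h1.const_mul 2)
      (by positivity))).sub (h1.log hz.ne')
    refine h.congr_deriv ?_
    simp
    field_simp
    ring
  have hmono : MonotoneOn (fun z => z - z ^ 2 / (2 * (1 + z)) - Real.log (1 + z)) (Set.Ici 0) := by
    apply monotoneOn_of_deriv_nonneg (convex_Ici 0)
    · intro z hz
      exact (hd z (by simp at *; linarith)).continuousAt.continuousWithinAt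
    · intro z hz
      rw [interior_Ici] at hz
      exact (hd z (by simp at *; linarith)).differentiableAt.differentiableWithinAt
    · intro z hz
      rw [interior_Ici] at hz
      rw [(hd z (by simp at *; linarith)).deriv]
      positivity
  have := hmono (Set.self_mem_Ici) (show v ∈ Set.Ici 0 from hv) hv
  simp at this
  linarith

lemma pw_bound (N : ℕ) (hN : 0 < N) (u : ℝ) (hu : 0 < 1 + u / Real.sqrt N) :
    Real.sqrt N * pw N (N + Real.sqrt N * u) ≤ Real.exp (1 / 2 - u / 2) := by
  have hN' : (1:ℝ) ≤ N := by exact_mod_cast hN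
  have hs : 1 ≤ Real.sqrt N := by rw [Real.one_le_sqrt]; exact hN'
  have hss : Real.sqrt N * Real.sqrt N = N := Real.mul_self_sqrt (by linarith)
  rw [pw_eq N hN u hu]
  have e : Real.exp (N * Real.log (1 + u / Real.sqrt N) - Real.sqrt N * u) ≤
      Real.exp (1 / 2 - u / 2) := by
    apply Real.exp_le_exp.2
    have e1 : Real.sqrt N * u = N * (u / Real.sqrt N) := by
      nth_rw 2 [← hss]; field_simp
    rcases le_or_gt u 0 with h | h
    · have := Real.log_le_sub_one_of_pos hu
      have : N * Real.log (1 + u / Real.sqrt N) ≤ N * (u / Real.sqrt N) := by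
        gcongr; linarith
      linarith
    · have := log_upper (u / Real.sqrt N) (by positivity)
      have h1 : N * Real.log (1 + u / Real.sqrt N) ≤ N * (u / Real.sqrt N
        - (u / Real.sqrt N) ^ 2 / (2 * (1 + u / Real.sqrt N))) := by gcongr
      have h2 : (N:ℝ) * ((u / Real.sqrt N) ^ 2 / (2 * (1 + u / Real.sqrt N))) =
          u ^ 2 / (2 * (1 + u / Real.sqrt N)) := by
        rw [div_pow, sq (Real.sqrt N), hss]; field_simp
      have h3 : u ^ 2 / (2 * (1 + u)) ≤ u ^ 2 / (2 * (1 + u / Real.sqrt N)) := by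
        gcongr
        exact div_le_self h.le hs
      have h4 : u / 2 - 1 / 2 ≤ u ^ 2 / (2 * (1 + u)) := by
        rw [le_div_iff₀ (by positivity)]
        nlinarith
      rw [mul_sub] at h1
      linarith
  have s := stir_le N hN
  calc _ ≤ 1 * Real.exp (1 / 2 - u / 2) := by gcongr; exact s.1
    _ = _ := one_mul _

lemma sqrt_nat_tendsto : Tendsto (fun N : ℕ => Real.sqrt N) atTop atTop :=
  Real.tendsto_sqrt_atTop.comp tendsto_natCast_atTop_atTop

lemma pw_tendsto (u : ℝ) : Tendsto (fun N : ℕ => Real.sqrt N * pw N (N + Real.sqrt N * u)) atTop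
    (𝓝 ((Real.sqrt (2 * Real.pi))⁻¹ * Real.exp (-u ^ 2 / 2))) := by
  have hv : Tendsto (fun N : ℕ => u / Real.sqrt N) atTop (𝓝 0) :=
    tendsto_const_nhds.div_atTop sqrt_nat_tendsto
  have h1 : ∀ᶠ N : ℕ in atTop, |u / Real.sqrt N| < 1 / 2 := by
    have := hv.abs
    rw [abs_zero] at this
    exact this.eventually_lt_const (by norm_num)
  have hE : Tendsto (fun N : ℕ => N * Real.log (1 + u / Real.sqrt N) - Real.sqrt N * u) atTop
      (𝓝 (-u ^ 2 / 2)) := by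
    rw [tendsto_iff_norm_sub_tendsto_zero]
    have hb : Tendsto (fun N : ℕ => 2 * u ^ 2 * |u / Real.sqrt N|) atTop (𝓝 0) := by
      have := hv.abs.const_mul (2 * u ^ 2)
      simpa using this
    refine squeeze_zero' (Eventually.of_forall fun _ => norm_nonneg _) ?_ hb
    filter_upwards [h1, eventually_gt_atTop 0] with N h1 hN
    have hN' : (0:ℝ) < N := by exact_mod_cast hN
    have hs : 0 < Real.sqrt N := Real.sqrt_pos.2 hN'
    have hss : Real.sqrt N ^ 2 = N := Real.sq_sqrt hN'.le
    have h := Real.abs_log_sub_add_sum_range_le (x := -(u / Real.sqrt N))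
      (by rw [abs_neg]; linarith) 2
    set v := u / Real.sqrt N with hvdef
    have huv : u = Real.sqrt N * v := by rw [hvdef]; field_simp
    simp only [Finset.sum_range_succ, Finset.sum_range_zero, abs_neg, sub_neg_eq_add] at h
    have e : (N:ℝ) * Real.log (1 + v) - Real.sqrt N * u - -u ^ 2 / 2 =
        N * (0 + (-v) ^ (0 + 1) / (((0:ℕ):ℝ) + 1) + (-v) ^ (1 + 1) / (((1:ℕ):ℝ) + 1) + Real.log (1 + v)) := by
      rw [huv]; push_cast; linear_combination (-v + v^2/2) * hss
    rw [e, Real.norm_eq_abs, abs_mul, abs_of_pos hN']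
    calc _ ≤ N * (|v| ^ (2 + 1) / (1 - |v|)) := by gcongr
      _ ≤ N * (2 * |v| ^ 3) := by
        gcongr
        rw [div_le_iff₀ (by linarith)]
        have : 0 ≤ |v| ^ 3 := by positivity
        norm_num
        nlinarith
      _ = _ := by
        have : |v| ^ 3 = v ^ 2 * |v| := by rw [pow_succ, sq_abs]
        rw [this, huv]; linear_combination (-2*v^2*|v|) * hss
  have hS : Tendsto (fun N => 1 / (Real.sqrt 2 * Stirling.stirlingSeq N)) atTop
      (𝓝 (Real.sqrt (2 * Real.pi))⁻¹) := by
    have := (Stirling.tendsto_stirlingSeq_sqrt_pi.const_mul (Real.sqrt 2)).inv₀ (by positivity)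
    rw [Real.sqrt_mul (by norm_num)]
    simpa [one_div] using this
  have := hS.mul (Real.continuous_exp.continuousAt.tendsto.comp hE)
  refine this.congr' ?_
  filter_upwards [h1, eventually_gt_atTop 0] with N h1 hN
  rw [pw_eq N hN u (by have := (abs_lt.1 h1).1; linarith)]
  rfl

lemma term_tendsto_zero (x y m : ℕ) :
    Tendsto (fun t => pw m t * (hC t m x * hC t m y)) atTop (𝓝 0) := by
  set C : ℝ := (2 ^ x * x ! * 2 ^ x) * (2 ^ y * y ! * 2 ^ y) / m ! with hC'
  have h0 : Tendsto (fun t : ℝ => C * (t ^ (m + x + y) * Real.exp (-t))) atTop (𝓝 0) := by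
    simpa using (Real.tendsto_pow_mul_exp_neg_atTop_nhds_zero (m + x + y)).const_mul C
  refine squeeze_zero_norm' ?_ h0
  filter_upwards [eventually_ge_atTop ((m:ℝ) + 1)] with t ht
  have hm : (0:ℝ) ≤ m := by positivity
  have ht1 : 1 ≤ t := by linarith
  have ht0 : 0 ≤ t := by linarith
  have hs : 1 ≤ Real.sqrt t := by rw [Real.one_le_sqrt]; exact ht1
  have hb : |t - m| ≤ 2 * t * Real.sqrt t := by
    rw [abs_of_nonneg (by linarith)]; nlinarith
  have hx := hC_bound t (2*t) ht1 (by linarith) m hb x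
  have hy := hC_bound t (2*t) ht1 (by linarith) m hb y
  rw [Real.norm_eq_abs, abs_mul, abs_mul, abs_of_nonneg (show 0 ≤ pw m t by unfold pw; positivity)]
  calc _ ≤ pw m t * ((2 ^ x * x ! * (2*t) ^ x) * (2 ^ y * y ! * (2*t) ^ y)) := by
        have : 0 ≤ pw m t := by unfold pw; positivity
        gcongr
    _ = _ := by
        rw [hC']; unfold pw
        rw [mul_pow, mul_pow, pow_add, pow_add]
        ring

def gN (x y N : ℕ) (u : ℝ) : ℝ := 1 / 2 * Real.sqrt N * TT x y N (N + Real.sqrt N * u)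

lemma t_lower (A : ℝ) (N : ℕ) (hN : 2 * A ≤ Real.sqrt N) (u : ℝ) (hu : -A < u) :
    (N:ℝ) / 2 ≤ N + Real.sqrt N * u := by
  have hss : Real.sqrt N * Real.sqrt N = N := Real.mul_self_sqrt (by positivity)
  have hs := Real.sqrt_nonneg N
  nlinarith

lemma gN_bound (x y : ℕ) (A : ℝ) (hA0 : 0 ≤ A) : ∃ C : ℝ, ∀ N : ℕ, 2 ≤ N → 2 * A ≤ Real.sqrt N →
    ∀ u, -A < u → |gN x y N u| ≤ C * Real.exp (-(1/4) * u) := by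
  refine ⟨2 * Real.exp (1/2) * ((2 ^ x * x !) * (2 ^ y * y !)) *
    (8 ^ (x + y) * (x + y)! * Real.exp (1/8 + A / 2 )), ?_⟩
  intro N hN2 hNA u hu
  have ht := t_lower A N hNA u hu
  have hN' : (2:ℝ) ≤ N := by exact_mod_cast hN2
  have hN0 : (0:ℝ) < N := by linarith
  have hs : 0 < Real.sqrt N := Real.sqrt_pos.2 hN0
  have hss : Real.sqrt N * Real.sqrt N = N := Real.mul_self_sqrt hN0.le
  set t := (N:ℝ) + Real.sqrt N * u with htdef
  have ht1 : 1 ≤ t := by linarith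
  have ht0 : 0 < t := by linarith
  have hst1 : 1 ≤ Real.sqrt t := by rw [Real.one_le_sqrt]; exact ht1
  have hst : Real.sqrt N ≤ 2 * Real.sqrt t := by
    rw [show (2:ℝ) * Real.sqrt t = Real.sqrt (4 * t) by
      rw [Real.sqrt_mul (by norm_num), show (4:ℝ) = 2 ^ 2 by norm_num, Real.sqrt_sq (by norm_num)]]
    apply Real.sqrt_le_sqrt
    linarith
  have hb1 : 1 ≤ 1 + 2 * |u| := by linarith [abs_nonneg u]
  have hA1 : |t - N| ≤ 2 * |u| * Real.sqrt t := by
    rw [htdef, add_sub_cancel_left, abs_mul, abs_of_pos hs]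
    nlinarith [abs_nonneg u]
  have hA : |t - N| ≤ (1 + 2 * |u|) * Real.sqrt t := by nlinarith
  have hB : |t - ((N - 1 : ℕ):ℝ)| ≤ (1 + 2 * |u|) * Real.sqrt t := by
    rw [Nat.cast_sub (by omega)]
    calc _ = |(t - N) + 1| := by congr 1; push_cast; ring
      _ ≤ |t - N| + |1| := abs_add_le _ _
      _ ≤ _ := by rw [abs_one]; nlinarith
  have e1 := hC_bound t _ ht1 hb1 N hA x
  have e2 := hC_bound t _ ht1 hb1 N hA y
  have e3 := hC_bound t _ ht1 hb1 (N-1) hB x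
  have e4 := hC_bound t _ ht1 hb1 (N-1) hB y
  set b := 1 + 2 * |u| with hbdef
  have hpos : 0 < 1 + u / Real.sqrt N := by
    have : t = N * (1 + u / Real.sqrt N) := by
      rw [htdef, mul_add, mul_one]
      congr 1
      nth_rw 2 [← hss]; field_simp
    rw [this] at ht0
    exact pos_of_mul_pos_right ht0 hN0.le
  have e5 := pw_bound N (by omega) u hpos
  rw [← htdef] at e5
  have e6 : (N:ℝ) / t ≤ 2 := by rw [div_le_iff₀ ht0]; linarith
  have e7 : b ^ (x + y) ≤ 8 ^ (x+y) * (x+y)! * Real.exp (1/8 + u / 4 + A / 2) := by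
    have h := Real.pow_div_factorial_le_exp (x := b/8) (by positivity) (x + y)
    rw [div_le_iff₀ (by positivity), div_pow, div_le_iff₀ (by positivity)] at h
    have h2 : Real.exp (b/8) ≤ Real.exp (1/8 + u / 4 + A / 2) := by
      apply Real.exp_le_exp.2
      have : |u| ≤ u + 2 * A := by
        rcases abs_cases u with h | h <;> linarith
      rw [hbdef]; linarith
    calc _ ≤ _ := h
      _ ≤ Real.exp (1/8 + u / 4 + A / 2) * (x+y)! * 8 ^ (x+y) := by gcongr
      _ = _ := by ring
  have e8 : 0 ≤ pw N t := by unfold pw; positivity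
  unfold gN TT
  rw [← htdef]
  have e9 : |hC t N x * hC t (N - 1) y + hC t (N - 1) x * hC t N y| ≤
      2 * ((2 ^ x * x !) * (2 ^ y * y !)) * b ^ (x + y) := by
    calc _ ≤ |hC t N x * hC t (N - 1) y| + |hC t (N - 1) x * hC t N y| := abs_add_le _ _
      _ ≤ (2 ^ x * x ! * b ^ x) * (2 ^ y * y ! * b ^ y) + (2 ^ x * x ! * b ^ x) * (2 ^ y * y ! * b ^ y) := by
        rw [abs_mul, abs_mul]; gcongr
      _ = _ := by rw [pow_add]; ring
  calc _ = 1/2 * (Real.sqrt N * pw N t) * (N / t) *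
        |hC t N x * hC t (N - 1) y + hC t (N - 1) x * hC t N y| := by
        rw [show ∀ a b c d e : ℝ, a * b * (c * d * e) = (a * (b * c) * d) * e by intros; ring,
          abs_mul, abs_of_nonneg (by positivity)]
    _ ≤ 1/2 * Real.exp (1/2 - u/2) * 2 * (2 * ((2 ^ x * x !) * (2 ^ y * y !)) *
        (8 ^ (x+y) * (x+y)! * Real.exp (1/8 + u / 4 + A / 2))) := by
        gcongr
        exact e9.trans (by gcongr)
    _ = _ := by
        have h1 : Real.exp (1/2 - u/2) = Real.exp (1/2) * Real.exp (-(1/4) * u) * Real.exp (-(1/4) * u) := by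
          rw [← Real.exp_add, ← Real.exp_add]; ring_nf
        have h2 : Real.exp (1/8 + u / 4 + A / 2) = Real.exp (1/8 + A/2) * Real.exp (1/4 * u) := by
          rw [← Real.exp_add]; ring_nf
        have h3 : Real.exp (-(1/4) * u) * Real.exp (1/4 * u) = 1 := by
          rw [← Real.exp_add]; simp
        rw [h1, h2]
        linear_combination (2 * Real.exp (1/2) * ((2 ^ x * x !) * (2 ^ y * y !)) *
    (8 ^ (x + y) * (x + y)! * Real.exp (1/8 + A / 2 )) * Real.exp (-(1/4) * u)) * h3

lemma gN_continuousOn (x y : ℕ) (A : ℝ) (N : ℕ) (hN2 : 2 ≤ N) (hNA : 2 * A ≤ Real.sqrt N) :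
    ContinuousOn (gN x y N) (Set.Ioi (-A)) := by
  intro u hu
  apply ContinuousAt.continuousWithinAt
  have ht := t_lower A N hNA u hu
  have hN' : (2:ℝ) ≤ N := by exact_mod_cast hN2
  have ht0 : 0 < (N:ℝ) + Real.sqrt N * u := by linarith
  have hT : ContinuousAt (TT x y N) ((N:ℝ) + Real.sqrt N * u) := by
    have c1 := fun m x => (hC_hasDerivAt _ ht0 m x).continuousAt
    have c2 := (pw_hasDerivAt _ ht0 N).continuousAt
    exact (c2.mul (continuousAt_const.div continuousAt_id ht0.ne')).mul
      (((c1 N x).mul (c1 (N-1) y)).add ((c1 (N-1) x).mul (c1 N y)))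
  have hl : ContinuousAt (fun u : ℝ => (N:ℝ) + Real.sqrt N * u) u := by fun_prop
  exact continuousAt_const.mul (ContinuousAt.comp (f := fun u : ℝ => (N:ℝ) + Real.sqrt N * u) hT hl)

def gLim (x y : ℕ) (u : ℝ) : ℝ :=
  (Real.sqrt (2 * Real.pi))⁻¹ * (Real.exp (-u ^ 2 / 2) * He x u * He y u)

lemma gN_tendsto (x y : ℕ) (u : ℝ) :
    Tendsto (fun N => gN x y N u) atTop (𝓝 (gLim x y u)) := by
  have hv : Tendsto (fun N : ℕ => u / Real.sqrt N) atTop (𝓝 0) :=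
    tendsto_const_nhds.div_atTop sqrt_nat_tendsto
  have hv1 : Tendsto (fun N : ℕ => 1 + u / Real.sqrt N) atTop (𝓝 1) := by
    simpa using hv.const_add 1
  have hev : ∀ᶠ N : ℕ in atTop, 0 < 1 + u / Real.sqrt N :=
    hv1.eventually_const_lt (by norm_num)
  have heq : ∀ᶠ N : ℕ in atTop, 0 < Real.sqrt N ∧ 0 < N ∧ 0 < 1 + u / Real.sqrt N ∧
      (N:ℝ) + Real.sqrt N * u = N * (1 + u / Real.sqrt N) := by
    filter_upwards [hev, eventually_gt_atTop 0] with N h1 hN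
    have hN0 : (0:ℝ) < N := by exact_mod_cast hN
    have hs : 0 < Real.sqrt N := Real.sqrt_pos.2 hN0
    have hss : Real.sqrt N * Real.sqrt N = N := Real.mul_self_sqrt hN0.le
    refine ⟨hs, hN, h1, ?_⟩
    rw [mul_add, mul_one]
    congr 1
    nth_rw 2 [← hss]; field_simp
  have htpos : ∀ᶠ N : ℕ in atTop, 0 < (N:ℝ) + Real.sqrt N * u := by
    filter_upwards [heq] with N ⟨h1, h2, h3, h4⟩
    rw [h4]
    have : (0:ℝ) < N := by exact_mod_cast h2
    positivity
  have hq : Tendsto (fun N : ℕ => (Real.sqrt (1 + u / Real.sqrt N))⁻¹) atTop (𝓝 1) := by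
    have := (hv1.sqrt).inv₀ (by simp)
    simpa using this
  have hinv : Tendsto (fun N : ℕ => 1 / Real.sqrt ((N:ℝ) + Real.sqrt N * u)) atTop (𝓝 0) := by
    have h1 : Tendsto (fun N : ℕ => (Real.sqrt N)⁻¹) atTop (𝓝 0) :=
      tendsto_inv_atTop_zero.comp sqrt_nat_tendsto
    have := h1.mul hq
    rw [zero_mul] at this
    refine this.congr' ?_
    filter_upwards [heq] with N ⟨h1, h2, h3, h4⟩
    rw [h4, Real.sqrt_mul (by positivity), one_div, mul_inv]
  have hu1 : Tendsto (fun N : ℕ => ((N:ℝ) + Real.sqrt N * u - (N:ℕ)) /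
      Real.sqrt ((N:ℝ) + Real.sqrt N * u)) atTop (𝓝 u) := by
    have := hq.const_mul u
    rw [mul_one] at this
    refine this.congr' ?_
    filter_upwards [heq] with N ⟨h1, h2, h3, h4⟩
    rw [add_sub_cancel_left, h4, Real.sqrt_mul (by positivity)]
    have : 0 < Real.sqrt (1 + u / Real.sqrt N) := Real.sqrt_pos.2 h3
    generalize Real.sqrt (1 + u / Real.sqrt N) = w at *
    field_simp
  have hu2 : Tendsto (fun N : ℕ => ((N:ℝ) + Real.sqrt N * u - ((N-1:ℕ):ℝ)) /
      Real.sqrt ((N:ℝ) + Real.sqrt N * u)) atTop (𝓝 u) := by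
    have := hu1.add hinv
    rw [add_zero] at this
    refine this.congr' ?_
    filter_upwards [eventually_gt_atTop 0] with N hN
    rw [Nat.cast_sub (by omega), ← add_div]
    congr 1
    push_cast
    ring
  have a1 := fun x => hC_tendsto _ _ u htpos hinv hu1 x
  have a2 := fun x => hC_tendsto _ _ u htpos hinv hu2 x
  have hNt : Tendsto (fun N : ℕ => (N:ℝ) / ((N:ℝ) + Real.sqrt N * u)) atTop (𝓝 1) := by
    have := hv1.inv₀ (by norm_num)
    rw [inv_one] at this
    refine this.congr' ?_
    filter_upwards [heq] with N ⟨h1, h2, h3, h4⟩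
    rw [h4]
    have : (N:ℝ) ≠ 0 := by positivity
    rw [← div_div, div_self this, one_div]
  have := (((pw_tendsto u).mul hNt).mul (((a1 x).mul (a2 y)).add ((a2 x).mul (a1 y)))).const_mul (1/2)
  have e : gLim x y u = 1 / 2 * ((Real.sqrt (2 * Real.pi))⁻¹ * Real.exp (-u ^ 2 / 2) * 1 *
    (He x u * He y u + He x u * He y u)) := by unfold gLim; ring
  rw [e]
  refine this.congr fun N => ?_
  unfold gN TT
  ring

lemma S_eq_integral (x y : ℕ) (A : ℝ) (hA0 : 0 ≤ A) (N : ℕ) (hN2 : 2 ≤ N) (hNA : 2 * A ≤ Real.sqrt N)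
    (u₀ : ℝ) (hu₀ : -A < u₀) :
    ∑ m ∈ Finset.range N, pw m (N + Real.sqrt N * u₀) *
      (hC (N + Real.sqrt N * u₀) m x * hC (N + Real.sqrt N * u₀) m y) =
    ∫ u in Set.Ioi u₀, gN x y N u := by
  have hN' : (2:ℝ) ≤ N := by exact_mod_cast hN2
  have hs : 0 < Real.sqrt N := Real.sqrt_pos.2 (by linarith)
  have hd : ∀ u ∈ Set.Ici u₀, HasDerivAt (fun u => ∑ m ∈ Finset.range N, pw m (N + Real.sqrt N * u) *
      (hC (N + Real.sqrt N * u) m x * hC (N + Real.sqrt N * u) m y)) (-gN x y N u) u := by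
    intro u hu
    have ht := t_lower A N hNA u (lt_of_lt_of_le hu₀ hu)
    have h1 := kernel_hasDerivAt (N + Real.sqrt N * u) (by linarith) x y N
    have h2 : HasDerivAt (fun u : ℝ => (N:ℝ) + Real.sqrt N * u) (Real.sqrt N) u := by
      simpa using ((hasDerivAt_id u).const_mul (Real.sqrt N)).const_add (N:ℝ)
    refine (HasDerivAt.comp u h1 h2).congr_deriv ?_
    unfold gN
    ring
  obtain ⟨C, hC⟩ := gN_bound x y A hA0
  have hsub : Set.Ioi u₀ ⊆ Set.Ioi (-A) := Set.Ioi_subset_Ioi hu₀.le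
  have hint : MeasureTheory.IntegrableOn (gN x y N) (Set.Ioi u₀) := by
    refine MeasureTheory.Integrable.mono'
      ((integrableOn_exp_mul_Ioi (a := -(1/4)) (by norm_num) u₀).const_mul C) 
      (((gN_continuousOn x y A N hN2 hNA).mono hsub).aestronglyMeasurable measurableSet_Ioi) ?_
    rw [MeasureTheory.ae_restrict_iff' measurableSet_Ioi]
    exact Eventually.of_forall fun u hu => hC N hN2 hNA u (hsub hu)
  have hlim : Tendsto (fun u => ∑ m ∈ Finset.range N, pw m (N + Real.sqrt N * u) *
      (_root_.hC (N + Real.sqrt N * u) m x * _root_.hC (N + Real.sqrt N * u) m y)) atTop (𝓝 0) := by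
    have h1 : Tendsto (fun u : ℝ => (N:ℝ) + Real.sqrt N * u) atTop atTop :=
      tendsto_atTop_add_const_left _ _ (tendsto_id.const_mul_atTop hs)
    have h2 := tendsto_finsetSum (Finset.range N) (fun m _ => (term_tendsto_zero x y m).comp h1)
    simpa using h2
  have := MeasureTheory.integral_Ioi_of_hasDerivAt_of_tendsto' hd hint.neg hlim
  rw [MeasureTheory.integral_neg] at this
  linarith

/-- If `θ(N) > 0` and `(θ(N) − N)/√N → s`, then the Charlier kernel converges pointwise
to the discrete Hermite kernel:
`lim_{N→∞} Σ_{m=0}^{N−1} C̃_m(x;θ(N))·C̃_m(y;θ(N)) = K_s(x,y)` for all `x, y ∈ ℕ`. -/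
theorem charlierKernel_tendsto_discreteHermiteKernel
    (s : ℝ) (θ : ℕ → ℝ) (hpos : ∀ N, 0 < θ N)
    (hlim : Tendsto (fun N : ℕ => (θ N - (N : ℝ)) / Real.sqrt (N : ℝ)) atTop (𝓝 s))
    (x y : ℕ) :
    Tendsto (fun N : ℕ => charlierKernel N (θ N) x y) atTop
      (𝓝 (discreteHermiteKernel s x y)) := by
  set A : ℝ := |s| + 1 with hA
  have hA0 : 0 ≤ A := by positivity
  set v : ℕ → ℝ := fun N => (θ N - (N : ℝ)) / Real.sqrt (N : ℝ) with hv
  have hsA : -A < s := by have := neg_abs_le s; linarith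
  have hvA : ∀ᶠ N in atTop, -A < v N := hlim.eventually_const_lt hsA
  have hNA : ∀ᶠ N : ℕ in atTop, 2 * A ≤ Real.sqrt N := sqrt_nat_tendsto.eventually_ge_atTop _
  obtain ⟨C, hC⟩ := gN_bound x y A hA0
  have key : Tendsto (fun N => ∫ u in Set.Ioi (-A), (Set.Ioi (v N)).indicator (gN x y N) u) atTop
      (𝓝 (∫ u in Set.Ioi (-A), (Set.Ioi s).indicator (gLim x y) u)) := by
    refine MeasureTheory.tendsto_integral_filter_of_dominated_convergence
      (fun u => C * Real.exp (-(1/4) * u)) ?_ ?_ ?_ ?_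
    · filter_upwards [hNA, eventually_ge_atTop 2] with N h1 h2
      exact ((gN_continuousOn x y A N h2 h1).aestronglyMeasurable measurableSet_Ioi).indicator
        measurableSet_Ioi
    · filter_upwards [hNA, eventually_ge_atTop 2] with N h1 h2
      rw [MeasureTheory.ae_restrict_iff' measurableSet_Ioi]
      refine Eventually.of_forall fun u hu => ?_
      exact (norm_indicator_le_norm_self _ _).trans (hC N h2 h1 u hu)
    · exact (integrableOn_exp_mul_Ioi (a := -(1/4)) (by norm_num) (-A)).const_mul C
    · have hne : ∀ᵐ u ∂(MeasureTheory.volume.restrict (Set.Ioi (-A))), u ≠ s :=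
        MeasureTheory.ae_restrict_of_ae (MeasureTheory.Measure.ae_ne _ s)
      filter_upwards [hne] with u hu
      rcases lt_or_gt_of_ne hu with h | h
      · rw [Set.indicator_of_notMem (by simp; linarith)]
        refine tendsto_const_nhds.congr' ?_
        filter_upwards [hlim.eventually_const_lt h] with N hN
        rw [Set.indicator_of_notMem]
        simpa using hN.le
      · rw [Set.indicator_of_mem (by simpa using h)]
        refine (gN_tendsto x y u).congr' ?_
        filter_upwards [hlim.eventually_lt_const h] with N hN
        rw [Set.indicator_of_mem]
        simpa using hN
  have e1 : discreteHermiteKernel s x y = (Real.sqrt (x ! * y ! : ℝ))⁻¹ *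
      ∫ u in Set.Ioi (-A), (Set.Ioi s).indicator (gLim x y) u := by
    rw [MeasureTheory.setIntegral_indicator measurableSet_Ioi,
      Set.inter_eq_right.2 (Set.Ioi_subset_Ioi hsA.le)]
    unfold gLim discreteHermiteKernel
    rw [MeasureTheory.integral_const_mul, ← mul_assoc, ← mul_inv, ← Real.sqrt_mul (by positivity)]
    unfold He
    congr 3
    ring
  rw [e1]
  refine (key.const_mul _).congr' ?_
  filter_upwards [hNA, hvA, eventually_ge_atTop 2] with N h1 h2 h3
  rw [kernel_eq _ (hpos N), MeasureTheory.setIntegral_indicator measurableSet_Ioi,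
      Set.inter_eq_right.2 (Set.Ioi_subset_Ioi h2.le), ← S_eq_integral x y A hA0 N h3 h1 (v N) h2]
  have hs : Real.sqrt N ≠ 0 := by positivity
  have : (N:ℝ) + Real.sqrt N * v N = θ N := by
    rw [hv]; field_simp; ring
  rw [this]

end
end

section
/- Fix s ∈ ℝ, k ≥ 1 and distinct points y_1, …, y_k ∈ ℕ, and let θ : ℕ → (0, ∞) satisfy (θ(N) − N)/√N → s as N → ∞. For each N ≥ 1 let ρ^{(N)}_k(y_1,…,y_k) = Z(N,θ(N))^{−1} · Σ_{S ⊇ {y_1,…,y_k}} ∏_{x∈S} (θ(N)^x/x!) · ∏_{x,x'∈S, x<x'} (x'−x)², where the sum is over all N-element subsets S of ℕ containing {y_1,…,y_k} and Z(N,θ) is the sum of the same weights over all N-element subsets of ℕ. Then lim_{N→∞} ρ^{(N)}_k(y_1,…,y_k) = det[ K_s(y_i, y_j) ]_{1≤i,j≤k}, where K_s is the discrete Hermite kernel. (This is the main theorem: the correlation functions of the poissonized Schur–Weyl measure, which coincides with the N-particle Charlier ensemble with θ = ν/N under x_i = λ_i + N − i, converge in the regime ν = N² + (s+o(1))N^{3/2}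 to the determinantal point process on ℕ with correlation kernel K_s.) -/
open Filter
open scoped Nat Topology

noncomputable section

/-- The weight of a finite set `S ⊂ ℕ` in the Charlier ensemble with parameter `θ`:
`∏_{x∈S} θ^x/x! · ∏_{x<x', x,x'∈S} (x'−x)²`. -/
def charlierWeight (θ : ℝ) (S : Finset ℕ) : ℝ :=
  (∏ x ∈ S, θ ^ x / (x ! : ℝ)) *
    ∏ x ∈ S, ∏ y ∈ S.filter (fun y => x < y), ((y : ℝ) - (x : ℝ)) ^ 2

lemma aux_andreief (N : ℕ) (T : Finset ℕ) (g : ℕ → ℝ) (A : ℕ → Fin N → ℝ) :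
    ∑ f ∈ Fintype.piFinset (fun _ : Fin N => T),
      (∏ i, g (f i)) * (Matrix.det (Matrix.of fun i j : Fin N => A (f i) j)) ^ 2 =
    (N ! : ℝ) * Matrix.det (Matrix.of fun i j : Fin N => ∑ x ∈ T, g x * A x i * A x j) := by
  set G : Matrix (Fin N) (Fin N) ℝ := Matrix.of fun i j : Fin N => ∑ x ∈ T, g x * A x i * A x j
    with hG
  have key : ∀ σ : Equiv.Perm (Fin N),
      ∑ f ∈ Fintype.piFinset (fun _ : Fin N => T),
        (∏ i, g (f i) * A (f i) (σ i)) * (Matrix.det (Matrix.of fun i j : Fin N => A (f i) j)) =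
      ((Equiv.Perm.sign σ : ℤ) : ℝ) * G.det := by
    intro σ
    rw [← Matrix.det_permute, ← Matrix.det_transpose, Matrix.det_apply']
    simp_rw [← Matrix.det_transpose (Matrix.of fun i j : Fin N => A _ j), Matrix.det_apply',
      Finset.mul_sum]
    rw [Finset.sum_comm]
    refine Finset.sum_congr rfl fun τ _ => ?_
    simp only [Matrix.transpose_apply, Matrix.submatrix_apply, hG, Matrix.of_apply, id]
    rw [Finset.prod_univ_sum, Finset.mul_sum]
    refine Finset.sum_congr rfl fun f _ => ?_
    simp only [Finset.prod_mul_distrib]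
    ring
  have h2 : ∀ f : Fin N → ℕ,
      (∏ i, g (f i)) * (Matrix.det (Matrix.of fun i j : Fin N => A (f i) j)) ^ 2 =
      ∑ σ : Equiv.Perm (Fin N), ((Equiv.Perm.sign σ : ℤ) : ℝ) * ((∏ i, g (f i) * A (f i) (σ i)) *
        (Matrix.det (Matrix.of fun i j : Fin N => A (f i) j))) := by
    intro f
    have hd : Matrix.det (Matrix.of fun i j : Fin N => A (f i) j) =
        ∑ σ : Equiv.Perm (Fin N), ((Equiv.Perm.sign σ : ℤ) : ℝ) * ∏ i, A (f i) (σ i) := by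
      rw [← Matrix.det_transpose, Matrix.det_apply']
      rfl
    set d := Matrix.det (Matrix.of fun i j : Fin N => A (f i) j)
    calc (∏ i, g (f i)) * d ^ 2 = (∏ i, g (f i)) * d * d := by ring
      _ = _ := by
        nth_rewrite 1 [hd]
        rw [Finset.mul_sum, Finset.sum_mul]
        refine Finset.sum_congr rfl fun τ _ => ?_
        simp only [Finset.prod_mul_distrib]
        ring
  rw [Finset.sum_congr rfl fun f _ => h2 f, Finset.sum_comm]
  simp_rw [← Finset.mul_sum, key, ← mul_assoc]
  have h3 : ∀ σ : Equiv.Perm (Fin N),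
      ((Equiv.Perm.sign σ : ℤ) : ℝ) * ((Equiv.Perm.sign σ : ℤ) : ℝ) = 1 := by
    intro σ
    rcases Int.units_eq_one_or (Equiv.Perm.sign σ) with h | h <;> simp [h]
  simp_rw [h3]
  simp [Fintype.card_perm]

lemma aux_fiber_card (N : ℕ) (T S : Finset ℕ) (hS : S ∈ T.powersetCard N) :
    ((Fintype.piFinset (fun _ : Fin N => T)).filter
      (fun f => Function.Injective f ∧ Finset.univ.image f = S)).card = N ! := by
  obtain ⟨hST, hc⟩ := Finset.mem_powersetCard.1 hS
  have hcard : Fintype.card (Fin N ≃ S) = N ! := by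
    have e : Fin N ≃ S := Fintype.equivOfCardEq (by simp [hc])
    rw [Fintype.card_equiv e]; simp
  rw [← hcard, ← Finset.card_univ]
  symm
  refine Finset.card_bij (fun e _ => fun i => (e i : ℕ)) ?_ ?_ ?_
  · intro e _
    simp only [Finset.mem_filter, Fintype.mem_piFinset]
    refine ⟨fun i => hST (e i).2, fun a b h => e.injective (Subtype.ext h), ?_⟩
    ext x
    simp only [Finset.mem_image, Finset.mem_univ, true_and]
    constructor
    · rintro ⟨i, rfl⟩; exact (e i).2
    · intro hx; exact ⟨e.symm ⟨x, hx⟩, by simp⟩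
  · intro e _ e' _ h
    ext i
    exact congrFun h i
  · intro f hf
    simp only [Finset.mem_filter, Fintype.mem_piFinset] at hf
    obtain ⟨_, hinj, him⟩ := hf
    have hm : ∀ i, f i ∈ S := fun i => by rw [← him]; exact Finset.mem_image_of_mem _ (by simp)
    refine ⟨Equiv.ofBijective (fun i => (⟨f i, hm i⟩ : S)) ⟨?_, ?_⟩, by simp, ?_⟩
    · intro a b h
      exact hinj (congrArg Subtype.val h)
    · rintro ⟨x, hx⟩
      rw [← him] at hx
      obtain ⟨i, _, rfl⟩ := Finset.mem_image.1 hx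
      exact ⟨i, rfl⟩
    · rfl

lemma aux_fiber_sum (N : ℕ) (T : Finset ℕ) (W : Finset ℕ → ℝ) :
    ∑ f ∈ (Fintype.piFinset (fun _ : Fin N => T)).filter (fun f => Function.Injective f),
      W (Finset.univ.image f) = (N ! : ℝ) * ∑ S ∈ T.powersetCard N, W S := by
  rw [← Finset.sum_fiberwise_of_maps_to (t := T.powersetCard N)
    (g := fun f : Fin N → ℕ => Finset.univ.image f), Finset.mul_sum]
  · refine Finset.sum_congr rfl fun S hS => ?_
    rw [Finset.filter_filter, ← aux_fiber_card N T S hS, ← nsmul_eq_mul, ← Finset.sum_const]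
    refine Finset.sum_congr rfl fun f hf => ?_
    rw [(Finset.mem_filter.1 hf).2.2]
  · intro f hf
    simp only [Finset.mem_filter, Fintype.mem_piFinset] at hf
    rw [Finset.mem_powersetCard]
    refine ⟨?_, by rw [Finset.card_image_of_injective _ hf.2]; simp⟩
    intro x hx
    obtain ⟨i, _, rfl⟩ := Finset.mem_image.1 hx
    exact hf.1 i

/-- finite Cauchy–Binet -/
lemma aux_cauchy_binet (N : ℕ) (T : Finset ℕ) (z : ℕ → ℝ) (A : ℕ → Fin N → ℝ)
    (p : Finset ℕ → ℝ)
    (hp : ∀ f : Fin N → ℕ, Function.Injective f →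
      p (Finset.univ.image f) = (Matrix.det (Matrix.of fun i j : Fin N => A (f i) j)) ^ 2) :
    ∑ S ∈ T.powersetCard N, (∏ x ∈ S, z x) * p S =
      Matrix.det (Matrix.of fun i j : Fin N => ∑ x ∈ T, z x * A x i * A x j) := by
  have h := aux_andreief N T z A
  have h' := aux_fiber_sum N T (fun S => (∏ x ∈ S, z x) * p S)
  have hne : (N ! : ℝ) ≠ 0 := by positivity
  apply mul_left_cancel₀ hne
  rw [← h', ← h]
  rw [Finset.sum_filter]
  refine Finset.sum_congr rfl fun f _ => ?_
  split_ifs with hf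
  · rw [hp f hf, Finset.prod_image hf.injOn]
  · rw [Function.not_injective_iff] at hf
    obtain ⟨a, b, hab, hne⟩ := hf
    rw [Matrix.det_zero_of_row_eq hne]
    · simp
    · ext j; simp [hab]

lemma aux_vandermonde_sq (θ : ℝ) (N : ℕ) (f : Fin N → ℕ) (hf : Function.Injective f) :
    charlierWeight θ (Finset.univ.image f) =
      (∏ i, θ ^ (f i) / ((f i) ! : ℝ)) *
        (Matrix.det (Matrix.vandermonde fun i => (f i : ℝ))) ^ 2 := by
  unfold charlierWeight
  rw [Finset.prod_image hf.injOn]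
  congr 1
  set S := Finset.univ.image f with hS
  have hc : S.card = N := by rw [hS, Finset.card_image_of_injective _ hf]; simp
  set e := S.orderEmbOfFin hc with he
  have hr : ∀ i, ∃ j, e j = f i := by
    intro i
    have : f i ∈ Set.range e := by
      rw [he, Finset.range_orderEmbOfFin]; simp [hS]
    exact this
  choose σ hσ using hr
  have hσi : Function.Injective σ := by
    intro a b h
    apply hf
    rw [← hσ, ← hσ, h]
  let τ : Equiv.Perm (Fin N) := Equiv.ofBijective σ (Finite.injective_iff_bijective.1 hσi)
  have h1 : Matrix.vandermonde (fun i => (f i : ℝ)) =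
      (Matrix.vandermonde (fun i => (e i : ℝ))).submatrix τ id := by
    ext i j
    simp [Matrix.vandermonde_apply, τ, hσ]
  rw [h1, Matrix.det_permute, mul_pow]
  have h3 : ((Equiv.Perm.sign τ : ℤ) : ℝ) ^ 2 = 1 := by
    rcases Int.units_eq_one_or (Equiv.Perm.sign τ) with h | h <;> simp [h]
  rw [h3, one_mul, Matrix.det_vandermonde]
  have hSe : S = Finset.univ.image e := (Finset.image_orderEmbOfFin_univ S hc).symm
  rw [← Finset.prod_pow]
  rw [hSe, Finset.prod_image e.injective.injOn]
  refine Finset.prod_congr rfl fun i _ => ?_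
  rw [← Finset.prod_pow]
  have : (Finset.univ.image e).filter (fun y => e i < y) = (Finset.Ioi i).image e := by
    ext x
    simp only [Finset.mem_filter, Finset.mem_image, Finset.mem_univ, true_and, Finset.mem_Ioi]
    constructor
    · rintro ⟨⟨j, rfl⟩, h⟩; exact ⟨j, e.lt_iff_lt.1 h, rfl⟩
    · rintro ⟨j, h, rfl⟩; exact ⟨⟨j, rfl⟩, e.lt_iff_lt.2 h⟩
  rw [this, Finset.prod_image e.injective.injOn]

lemma aux_hasSum (N : ℕ) (z : ℕ → ℝ) (hz : ∀ x, 0 ≤ z x) (A : ℕ → Fin N → ℝ)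
    (p : Finset ℕ → ℝ) (hp0 : ∀ S, 0 ≤ p S)
    (hp : ∀ f : Fin N → ℕ, Function.Injective f →
      p (Finset.univ.image f) = (Matrix.det (Matrix.of fun i j : Fin N => A (f i) j)) ^ 2)
    (M : Matrix (Fin N) (Fin N) ℝ) (hM : ∀ i j, HasSum (fun x => z x * A x i * A x j) (M i j)) :
    HasSum (fun S : Finset ℕ => if S.card = N then (∏ x ∈ S, z x) * p S else 0) M.det := by
  set F : Finset ℕ → ℝ := fun S => if S.card = N then (∏ x ∈ S, z x) * p S else 0 with hF
  have hF0 : ∀ S, 0 ≤ F S := by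
    intro S
    simp only [hF]
    split_ifs
    · exact mul_nonneg (Finset.prod_nonneg fun x _ => hz x) (hp0 S)
    · exact le_rfl
  have hmono : Monotone (fun m : ℕ => (Finset.range m).powerset) := by
    intro a b h
    exact Finset.powerset_mono.2 (Finset.range_mono h)
  have hex : ∀ S : Finset ℕ, ∃ m : ℕ, S ∈ (Finset.range m).powerset := by
    intro S
    obtain ⟨m, hm⟩ := S.exists_nat_subset_range
    exact ⟨m, Finset.mem_powerset.2 hm⟩
  have htop : Tendsto (fun m : ℕ => (Finset.range m).powerset) atTop atTop :=
    tendsto_atTop_finset_of_monotone hmono hex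
  have hlim : Tendsto (fun m : ℕ => ∑ S ∈ (Finset.range m).powerset, F S) atTop (𝓝 M.det) := by
    have h1 : ∀ m : ℕ, ∑ S ∈ (Finset.range m).powerset, F S =
        Matrix.det (Matrix.of fun i j : Fin N =>
          ∑ x ∈ Finset.range m, z x * A x i * A x j) := by
      intro m
      rw [← aux_cauchy_binet N (Finset.range m) z A p hp, Finset.powersetCard_eq_filter,
        Finset.sum_filter]
    simp_rw [h1]
    have hc : Continuous fun B : Matrix (Fin N) (Fin N) ℝ => B.det :=
      Continuous.matrix_det continuous_id
    refine (hc.tendsto M).comp ?_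
    refine tendsto_pi_nhds.2 fun i => tendsto_pi_nhds.2 fun j => ?_
    exact (hM i j).tendsto_sum_nat
  have hmonoS : Monotone (fun m : ℕ => ∑ S ∈ (Finset.range m).powerset, F S) := by
    intro a b h
    exact Finset.sum_le_sum_of_subset_of_nonneg (hmono h) fun S _ _ => hF0 S
  have hsum : Summable F := by
    refine summable_of_sum_le (c := M.det) hF0 fun u => ?_
    obtain ⟨m, hm⟩ := (htop.eventually (eventually_ge_atTop u)).exists
    exact (Finset.sum_le_sum_of_subset_of_nonneg hm fun S _ _ => hF0 S).trans
      (hmonoS.ge_of_tendsto hlim m)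
  have := hsum.hasSum.comp htop
  rw [tendsto_nhds_unique hlim this]
  exact hsum.hasSum

lemma aux_correlation (N : ℕ) (A : ℕ → Fin N → ℝ)
    (p : Finset ℕ → ℝ) (hp0 : ∀ S, 0 ≤ p S)
    (hp : ∀ f : Fin N → ℕ, Function.Injective f →
      p (Finset.univ.image f) = (Matrix.det (Matrix.of fun i j : Fin N => A (f i) j)) ^ 2)
    (hA : ∀ i j, HasSum (fun x => A x i * A x j) (if i = j then 1 else 0))
    (k : ℕ) (y : Fin k → ℕ) (hy : Function.Injective y) :
    (∑' S : Finset ℕ, (if S.card = N then p S else 0) = 1) ∧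
    (∑' S : Finset ℕ, (if S.card = N ∧ ∀ i, y i ∈ S then p S else 0) =
      Matrix.det (Matrix.of fun i j : Fin k => ∑ n, A (y i) n * A (y j) n)) := by
  have hone := aux_hasSum N (fun _ => 1) (fun _ => zero_le_one) A p hp0 hp 1
    (by intro i j; simpa [Matrix.one_apply] using hA i j)
  simp only [Finset.prod_const_one, one_mul, Matrix.det_one] at hone
  refine ⟨hone.tsum_eq, ?_⟩
  set Y : Finset ℕ := Finset.univ.image y with hY
  have hYc : Y.card = k := by rw [hY, Finset.card_image_of_injective _ hy]; simp
  set B : Matrix (Fin k) (Fin N) ℝ := Matrix.of fun i n => A (y i) n with hB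
  have hK : (Matrix.of fun i j : Fin k => ∑ n, A (y i) n * A (y j) n) = B * B.transpose := by
    ext i j; simp [Matrix.mul_apply, hB]
  rw [hK]
  -- main identity for r > 0
  have hr : ∀ r : ℝ, 0 < r → r ≤ 1 →
      ∑' S : Finset ℕ, (if S.card = N then r ^ (Y \ S).card * p S else 0) =
        Matrix.det (r • (1 : Matrix (Fin k) (Fin k) ℝ) + (1 - r) • (B * B.transpose)) := by
    intro r hr hr1
    have h1 := aux_hasSum N (fun x => if x ∈ Y then r⁻¹ else 1)
      (fun x => by split_ifs <;> positivity) A p hp0 hp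
      (1 + (r⁻¹ - 1) • (B.transpose * B)) (by
        intro i j
        have e1 := hA i j
        have e2 : HasSum (fun x => if x ∈ Y then (r⁻¹ - 1) * (A x i * A x j) else 0)
            (∑ x ∈ Y, (r⁻¹ - 1) * (A x i * A x j)) := by
          have := hasSum_sum_of_ne_finset_zero (L := SummationFilter.unconditional ℕ)
            (f := fun x => if x ∈ Y then (r⁻¹ - 1) * (A x i * A x j) else 0) (s := Y)
            (by intro b hb; simp [hb])
          rwa [Finset.sum_congr rfl (fun x hx => if_pos hx)] at this
        have e3 := e1.add e2
        convert e3 using 1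
        · ext x
          split_ifs <;> ring
        · rw [hY, Finset.sum_image hy.injOn]
          simp [Matrix.one_apply, Matrix.mul_apply, hB, Finset.mul_sum])
    have h2 := h1.mul_left (r ^ k)
    have h3 : (fun S : Finset ℕ => r ^ k * (if S.card = N then
        (∏ x ∈ S, if x ∈ Y then r⁻¹ else 1) * p S else 0)) =
        fun S : Finset ℕ => (if S.card = N then r ^ (Y \ S).card * p S else 0) := by
      ext S
      split_ifs
      · rw [← mul_assoc]
        congr 1
        rw [Finset.prod_ite, Finset.prod_const, Finset.prod_const_one, mul_one]
        have : (S.filter (· ∈ Y)).card + (Y \ S).card = k := by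
          rw [← hYc, Finset.filter_mem_eq_inter, Finset.inter_comm,
            Finset.card_inter_add_card_sdiff]
        rw [← this, pow_add, mul_comm, ← mul_assoc, ← mul_pow, inv_mul_cancel₀ hr.ne', one_pow,
          one_mul]
      · simp
    rw [h3] at h2
    rw [h2.tsum_eq]
    have h4 : (1 + (r⁻¹ - 1) • (B.transpose * B)).det = (1 + (r⁻¹ - 1) • (B * B.transpose)).det := by
      have := Matrix.det_one_add_mul_comm ((r⁻¹ - 1) • B.transpose) B
      rw [Matrix.smul_mul, Matrix.mul_smul] at this
      exact this
    rw [h4]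
    have h5 := Matrix.det_smul (1 + (r⁻¹ - 1) • (B * B.transpose)) r
    rw [Fintype.card_fin] at h5
    rw [← h5, smul_add, smul_smul]
    congr 3
    field_simp
  have hl1 : Tendsto (fun r : ℝ => ∑' S : Finset ℕ,
      (if S.card = N then r ^ (Y \ S).card * p S else 0)) (𝓝[>] 0)
      (𝓝 (∑' S : Finset ℕ, (if S.card = N ∧ ∀ i, y i ∈ S then p S else 0))) := by
    refine tendsto_tsum_of_dominated_convergence hone.summable ?_ ?_
    · intro S
      have hYS : (Y \ S).card = 0 ↔ ∀ i, y i ∈ S := by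
        rw [Finset.card_eq_zero, Finset.sdiff_eq_empty_iff_subset, hY, Finset.image_subset_iff]
        simp
      have : (if S.card = N ∧ ∀ i, y i ∈ S then p S else 0) =
          (fun r : ℝ => (if S.card = N then r ^ (Y \ S).card * p S else 0)) 0 := by
        by_cases h1 : S.card = N
        · by_cases h2 : ∀ i, y i ∈ S
          · simp only [h1, h2, hYS.2 h2]; simp
          · simp only [h1, true_and, if_true, h2, if_false]
            rw [zero_pow (fun h => h2 (hYS.1 h)), zero_mul]
        · simp [h1]
      rw [this]
      apply tendsto_nhdsWithin_of_tendsto_nhds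
      apply Continuous.tendsto
      split_ifs <;> fun_prop
    · filter_upwards [Ioc_mem_nhdsGT (zero_lt_one : (0 : ℝ) < 1)] with r hr S
      split_ifs
      · rw [Real.norm_of_nonneg (mul_nonneg (pow_nonneg hr.1.le _) (hp0 S))]
        exact mul_le_of_le_one_left (hp0 S) (pow_le_one₀ hr.1.le hr.2)
      · simp
  have hl2 : Tendsto (fun r : ℝ => Matrix.det (r • (1 : Matrix (Fin k) (Fin k) ℝ) +
      (1 - r) • (B * B.transpose))) (𝓝[>] 0) (𝓝 (B * B.transpose).det) := by
    have : (B * B.transpose).det = (fun r : ℝ => Matrix.det (r • (1 : Matrix (Fin k) (Fin k) ℝ) +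
      (1 - r) • (B * B.transpose))) 0 := by simp
    rw [this]
    apply tendsto_nhdsWithin_of_tendsto_nhds
    apply Continuous.tendsto
    apply Continuous.matrix_det
    fun_prop
  refine tendsto_nhds_unique (hl1.congr' ?_) hl2
  filter_upwards [Ioc_mem_nhdsGT (zero_lt_one : (0 : ℝ) < 1)] with r hr'
  exact hr r hr'.1 hr'.2

def auxC (θ : ℝ) : ℕ → ℕ → ℝ
  | 0, _ => 1
  | n + 1, x => auxC θ n x - (x / θ) * auxC θ n (x - 1)

def auxP (θ : ℝ) (x : ℕ) : ℝ := Real.exp (-θ) * (θ ^ x / (x ! : ℝ))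

lemma auxC_zero (θ : ℝ) (x : ℕ) : auxC θ 0 x = 1 := by rw [auxC]

lemma auxC_succ (θ : ℝ) (n x : ℕ) :
    auxC θ (n + 1) x = auxC θ n x - (x / θ) * auxC θ n (x - 1) := by rw [auxC]

lemma auxC_zero_right (θ : ℝ) (n : ℕ) : auxC θ n 0 = 1 := by
  induction n with
  | zero => rw [auxC]
  | succ n ih => rw [auxC_succ, ih]; simp

lemma auxC_shift (θ : ℝ) (n x : ℕ) :
    auxC θ n (x + 1) = auxC θ n x - (n / θ) * auxC θ (n - 1) x := by
  induction n generalizing x with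
  | zero => simp [auxC_zero]
  | succ n ih =>
    rw [auxC_succ, auxC_succ]
    simp only [Nat.add_sub_cancel]
    have h1 := ih x
    rw [h1]
    rcases n with _ | n
    · simp [auxC_zero]; ring
    · rcases x with _ | x
      · simp [auxC_zero_right]
        ring
      · have h2 := ih x
        have h3 := auxC_succ θ n (x + 1)
        simp only [Nat.add_sub_cancel] at h2 h3 ⊢
        push_cast at *
        linear_combination -((x + 1) / θ * h2 - (n + 1) / θ * h3)

lemma auxC_symm (θ : ℝ) (n x : ℕ) : auxC θ n x = auxC θ x n := by
  induction n generalizing x with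
  | zero => rw [auxC_zero, auxC_zero_right]
  | succ n ih => rw [auxC_succ, auxC_shift, ih, ih]

lemma auxC_bound (θ : ℝ) (hθ : 0 < θ) (n x : ℕ) : |auxC θ n x| ≤ (1 + n / θ) ^ x := by
  induction x generalizing n with
  | zero => simp [auxC_zero_right]
  | succ x ih =>
    rw [auxC_shift]
    have h1 := ih n
    have h2 := ih (n - 1)
    have h3 : (1 + ((n - 1 : ℕ) : ℝ) / θ) ^ x ≤ (1 + n / θ) ^ x := by
      gcongr
      exact Nat.sub_le _ _
    have h4 : 0 ≤ (n : ℝ) / θ := by positivity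
    calc |auxC θ n x - n / θ * auxC θ (n - 1) x|
        ≤ |auxC θ n x| + |n / θ * auxC θ (n - 1) x| := abs_sub _ _
      _ = |auxC θ n x| + n / θ * |auxC θ (n - 1) x| := by rw [abs_mul, abs_of_nonneg h4]
      _ ≤ (1 + n / θ) ^ x + n / θ * (1 + n / θ) ^ x := by
        gcongr
        exact h2.trans h3
      _ = _ := by ring

lemma auxP_summable (θ : ℝ) (hθ : 0 < θ) (n m : ℕ) :
    Summable fun x => auxP θ x * auxC θ n x * auxC θ m x := by
  have h := (Real.summable_pow_div_factorial (θ * (1 + n / θ) * (1 + m / θ))).mul_left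
    (Real.exp (-θ))
  refine Summable.of_norm_bounded h fun x => ?_
  rw [norm_mul, norm_mul, Real.norm_eq_abs, Real.norm_eq_abs, Real.norm_eq_abs]
  have h1 := auxC_bound θ hθ n x
  have h2 := auxC_bound θ hθ m x
  have hP : 0 ≤ auxP θ x := by unfold auxP; positivity
  rw [abs_of_nonneg hP]
  calc auxP θ x * |auxC θ n x| * |auxC θ m x|
      ≤ auxP θ x * (1 + n / θ) ^ x * (1 + m / θ) ^ x := by gcongr
    _ = _ := by unfold auxP; rw [mul_pow, mul_pow]; ring

lemma auxP_succ (θ : ℝ) (hθ : 0 < θ) (x : ℕ) :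
    auxP θ (x + 1) * ((x + 1 : ℕ) / θ) = auxP θ x := by
  unfold auxP
  rw [Nat.factorial_succ]
  push_cast
  rw [pow_succ]
  field_simp

lemma aux_parts (θ : ℝ) (hθ : 0 < θ) (n : ℕ) (g : ℕ → ℝ) (N : ℕ) :
    ∑ j ∈ Finset.range (N + 1), auxP θ j * auxC θ (n + 1) j * g j =
      ∑ j ∈ Finset.range (N + 1), auxP θ j * auxC θ n j * (g j - g (j + 1)) +
        auxP θ N * auxC θ n N * g (N + 1) := by
  induction N with
  | zero => simp [auxC_zero_right]; ring
  | succ N ih =>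
    rw [Finset.sum_range_succ, ih, Finset.sum_range_succ _ (N + 1), auxC_succ]
    have := auxP_succ θ hθ N
    simp only [Nat.add_sub_cancel]
    linear_combination (-auxC θ n N * g (N + 1)) * this

def auxT (θ : ℝ) (N n m : ℕ) : ℝ :=
  ∑ j ∈ Finset.range (N + 1), auxP θ j * auxC θ n j * auxC θ m j

lemma auxT_succ (θ : ℝ) (hθ : 0 < θ) (N n m : ℕ) :
    auxT θ N (n + 1) (m + 1) = (m + 1) / θ * auxT θ N n m +
      auxP θ N * auxC θ n N * auxC θ (m + 1) (N + 1) := by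
  unfold auxT
  rw [aux_parts θ hθ, Finset.mul_sum]
  congr 1
  refine Finset.sum_congr rfl fun j _ => ?_
  rw [auxC_shift]
  simp only [Nat.add_sub_cancel]
  push_cast
  ring

lemma auxT_zero (θ : ℝ) (hθ : 0 < θ) (N n : ℕ) :
    auxT θ N (n + 1) 0 = auxP θ N * auxC θ n N := by
  unfold auxT
  simp_rw [auxC_zero]
  rw [aux_parts θ hθ]
  simp

lemma auxT_symm (θ : ℝ) (N n m : ℕ) : auxT θ N n m = auxT θ N m n := by
  unfold auxT
  exact Finset.sum_congr rfl fun j _ => by ring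

lemma aux_orth (θ : ℝ) (hθ : 0 < θ) (n m : ℕ) :
    HasSum (fun x => auxP θ x * auxC θ n x * auxC θ m x)
      (if n = m then (n ! : ℝ) / θ ^ n else 0) := by
  have hs := auxP_summable θ hθ
  have hT : ∀ n m, Tendsto (fun N => auxT θ N n m) atTop
      (𝓝 (∑' x, auxP θ x * auxC θ n x * auxC θ m x)) := by
    intro n m
    exact ((hs n m).hasSum.tendsto_sum_nat).comp (tendsto_add_atTop_nat 1)
  have hz0 : ∀ n m, Tendsto (fun N => auxP θ N * auxC θ n N * auxC θ m N) atTop (𝓝 0) :=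
    fun n m => (hs n m).tendsto_atTop_zero
  suffices h : ∑' x, auxP θ x * auxC θ n x * auxC θ m x = if n = m then (n ! : ℝ) / θ ^ n else 0 by
    rw [← h]; exact (hs n m).hasSum
  have hn0 : ∀ n, ∑' x, auxP θ x * auxC θ (n + 1) x * auxC θ 0 x = 0 := by
    intro n
    refine tendsto_nhds_unique (hT (n + 1) 0) ?_
    simp_rw [auxT_zero θ hθ]
    simpa [auxC_zero] using hz0 n 0
  induction n generalizing m with
  | zero =>
    rcases m with _ | m
    · simp only [auxC_zero, mul_one, auxP, if_true, pow_zero, Nat.factorial_zero, Nat.cast_one,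
        div_one]
      rw [tsum_mul_left]
      have : ∑' x : ℕ, θ ^ x / (x ! : ℝ) = Real.exp θ := by
        rw [Real.exp_eq_exp_ℝ, NormedSpace.exp_eq_tsum_div]
      rw [this, ← Real.exp_add]; simp
    · rw [if_neg (by omega), ← hn0 m]
      exact tsum_congr fun x => by ring
  | succ n ih =>
    rcases m with _ | m
    · rw [hn0, if_neg (by omega)]
    · have h1 : Tendsto (fun N => auxT θ N (n + 1) (m + 1)) atTop
          (𝓝 ((m + 1) / θ * (if n = m then (n ! : ℝ) / θ ^ n else 0) + 0)) := by
        simp_rw [auxT_succ θ hθ]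
        refine Tendsto.add ?_ ?_
        · rw [← ih m]
          exact (hT n m).const_mul _
        · have := (hz0 n (m + 1)).sub ((hz0 n m).const_mul ((m + 1 : ℝ) / θ))
          simp only [mul_zero, sub_zero] at this
          refine this.congr fun N => ?_
          rw [auxC_shift]
          simp only [Nat.add_sub_cancel]
          push_cast
          ring
      rw [tendsto_nhds_unique (hT _ _) h1]
      by_cases h : n = m
      · subst h
        simp only [if_true, Nat.factorial_succ, pow_succ]
        push_cast
        field_simp
        ring
      · simp [h]

def auxQ (θ : ℝ) : ℕ → Polynomial ℝ
  | 0 => 1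
  | n + 1 => Polynomial.X * (auxQ θ n).comp (Polynomial.X - Polynomial.C 1) -
      Polynomial.C θ * auxQ θ n

lemma auxQ_monic (θ : ℝ) (n : ℕ) : (auxQ θ n).Monic ∧ (auxQ θ n).natDegree = n := by
  induction n with
  | zero => simp [auxQ]
  | succ n ih =>
    obtain ⟨h1, h2⟩ := ih
    have h3 : ((auxQ θ n).comp (Polynomial.X - Polynomial.C 1)).Monic :=
      h1.comp_X_sub_C 1
    have h4 : (Polynomial.X * (auxQ θ n).comp (Polynomial.X - Polynomial.C 1)).Monic :=
      Polynomial.monic_X.mul h3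
    have h5 : (Polynomial.X * (auxQ θ n).comp (Polynomial.X - Polynomial.C 1)).natDegree = n + 1 := by
      rw [Polynomial.monic_X.natDegree_mul h3, Polynomial.natDegree_comp, h2,
        Polynomial.natDegree_X_sub_C, Polynomial.natDegree_X]
      ring
    have h6 : (Polynomial.C θ * auxQ θ n).natDegree < 
        (Polynomial.X * (auxQ θ n).comp (Polynomial.X - Polynomial.C 1)).natDegree := by
      rw [h5]
      exact (Polynomial.natDegree_C_mul_le _ _).trans_lt (by omega)
    rw [auxQ]
    refine ⟨h4.sub_of_left (Polynomial.degree_lt_degree h6), ?_⟩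
    rw [Polynomial.natDegree_sub_eq_left_of_natDegree_lt h6, h5]

lemma auxQ_eval (θ : ℝ) (hθ : 0 < θ) (n x : ℕ) :
    (auxQ θ n).eval (x : ℝ) = (-θ) ^ n * auxC θ n x := by
  induction n generalizing x with
  | zero => simp [auxQ, auxC_zero]
  | succ n ih =>
    rw [auxQ, auxC_succ]
    simp only [Polynomial.eval_sub, Polynomial.eval_mul, Polynomial.eval_X, Polynomial.eval_comp,
      Polynomial.eval_C, ih]
    rcases x with _ | x
    · simp; ring
    · have : ((x + 1 : ℕ) : ℝ) - 1 = (x : ℕ) := by push_cast; ring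
      rw [this, ih]
      simp only [Nat.add_sub_cancel]
      field_simp
      ring

def auxU (θ : ℝ) (x n : ℕ) : ℝ :=
  Real.sqrt (auxP θ x) * Real.sqrt (θ ^ n / (n ! : ℝ)) * auxC θ n x

lemma auxU_symm (θ : ℝ) (hθ : 0 < θ) (x n : ℕ) : auxU θ x n = auxU θ n x := by
  unfold auxU auxP
  rw [Real.sqrt_mul (Real.exp_pos _).le, Real.sqrt_mul (Real.exp_pos _).le, auxC_symm]
  ring

lemma auxU_orth (θ : ℝ) (hθ : 0 < θ) (n m : ℕ) :
    HasSum (fun x => auxU θ x n * auxU θ x m) (if n = m then 1 else 0) := by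
  have h := (aux_orth θ hθ n m).mul_left
    (Real.sqrt (θ ^ n / (n ! : ℝ)) * Real.sqrt (θ ^ m / (m ! : ℝ)))
  have e1 : (fun x => auxU θ x n * auxU θ x m) = fun x =>
      (Real.sqrt (θ ^ n / (n ! : ℝ)) * Real.sqrt (θ ^ m / (m ! : ℝ))) *
        (auxP θ x * auxC θ n x * auxC θ m x) := by
    ext x
    unfold auxU
    have hP : 0 ≤ auxP θ x := by unfold auxP; positivity
    have := Real.mul_self_sqrt hP
    linear_combination (Real.sqrt (θ ^ n / (n ! : ℝ)) * Real.sqrt (θ ^ m / (m ! : ℝ)) * auxC θ n x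
      * auxC θ m x) * this
  have e2 : (if n = m then (1 : ℝ) else 0) =
      (Real.sqrt (θ ^ n / (n ! : ℝ)) * Real.sqrt (θ ^ m / (m ! : ℝ))) *
        (if n = m then (n ! : ℝ) / θ ^ n else 0) := by
    split_ifs with h
    · subst h
      rw [Real.mul_self_sqrt (by positivity)]
      field_simp
    · simp
  rw [e1, e2]
  exact h

lemma aux_weight (θ : ℝ) (hθ : 0 < θ) (N : ℕ) : ∃ c : ℝ, 0 < c ∧ ∀ f : Fin N → ℕ,
    Function.Injective f → c * charlierWeight θ (Finset.univ.image f) =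
      (Matrix.det (Matrix.of fun i j : Fin N => auxU θ (f i) j)) ^ 2 := by
  refine ⟨Real.exp (-θ) ^ N *
    (∏ j : Fin N, (θ ^ (j : ℕ) / ((j : ℕ) ! : ℝ)) / ((-θ) ^ (j : ℕ)) ^ 2), ?_, ?_⟩
  · refine mul_pos (by positivity) (Finset.prod_pos fun j _ => ?_)
    have : (-θ) ^ (j : ℕ) ≠ 0 := pow_ne_zero _ (by linarith)
    positivity
  · intro f hf
    rw [aux_vandermonde_sq θ N f hf]
    have h1 := Matrix.det_eval_matrixOfPolynomials_eq_det_vandermonde (fun i => (f i : ℝ))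
      (fun j : Fin N => auxQ θ j) (fun j => (auxQ_monic θ j).2) (fun j => (auxQ_monic θ j).1)
    rw [h1]
    have h2 : (Matrix.of fun i j : Fin N => auxU θ (f i) j) =
        Matrix.of fun i j : Fin N => Real.sqrt (auxP θ (f i)) *
          (Matrix.of fun i j : Fin N => (Real.sqrt (θ ^ (j : ℕ) / ((j : ℕ) ! : ℝ)) /
            (-θ) ^ (j : ℕ)) * (Matrix.of fun i j : Fin N => (auxQ θ j).eval (f i : ℝ)) i j) i j := by
      ext i j
      have : (-θ) ^ (j : ℕ) ≠ 0 := pow_ne_zero _ (by linarith)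
      simp only [Matrix.of_apply, auxQ_eval θ hθ, auxU]
      field_simp
    rw [h2, Matrix.det_mul_column, Matrix.det_mul_row, mul_pow, mul_pow, ← Finset.prod_pow,
      ← Finset.prod_pow]
    have h3 : ∏ i, Real.sqrt (auxP θ (f i)) ^ 2 =
        Real.exp (-θ) ^ N * ∏ i, θ ^ (f i) / ((f i) ! : ℝ) := by
      have : ∀ i, Real.sqrt (auxP θ (f i)) ^ 2 = Real.exp (-θ) * (θ ^ (f i) / ((f i) ! : ℝ)) := by
        intro i
        rw [Real.sq_sqrt (by unfold auxP; positivity)]; rfl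
      simp_rw [this, Finset.prod_mul_distrib]
      simp
    have h4 : ∏ j : Fin N, (Real.sqrt (θ ^ (j : ℕ) / ((j : ℕ) ! : ℝ)) / (-θ) ^ (j : ℕ)) ^ 2 =
        ∏ j : Fin N, (θ ^ (j : ℕ) / ((j : ℕ) ! : ℝ)) / ((-θ) ^ (j : ℕ)) ^ 2 := by
      refine Finset.prod_congr rfl fun j _ => ?_
      rw [div_pow, Real.sq_sqrt (by positivity)]
    rw [h3, h4]
    ring

lemma charlierWeight_nonneg (θ : ℝ) (hθ : 0 < θ) (S : Finset ℕ) : 0 ≤ charlierWeight θ S := by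
  unfold charlierWeight
  refine mul_nonneg (Finset.prod_nonneg fun x _ => by positivity)
    (Finset.prod_nonneg fun x _ => Finset.prod_nonneg fun y _ => by positivity)

lemma aux_ratio (θ : ℝ) (hθ : 0 < θ) (N k : ℕ) (y : Fin k → ℕ) (hy : Function.Injective y) :
    (∑' S : {S : Finset ℕ // S.card = N ∧ ∀ i : Fin k, y i ∈ S},
            charlierWeight θ (S : Finset ℕ)) /
          ∑' S : {S : Finset ℕ // S.card = N}, charlierWeight θ (S : Finset ℕ) =
    Matrix.det (Matrix.of fun i j : Fin k =>
      ∑ n ∈ Finset.range N, auxU θ (y i) n * auxU θ (y j) n) := by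
  obtain ⟨c, hc, hw⟩ := aux_weight θ hθ N
  obtain ⟨h1, h2⟩ := aux_correlation N (fun x n => auxU θ x n) (fun S => c * charlierWeight θ S)
    (fun S => mul_nonneg hc.le (charlierWeight_nonneg θ hθ S)) hw
    (fun i j => by simpa [Fin.ext_iff] using auxU_orth θ hθ i j) k y hy
  have e1 : ∑' S : {S : Finset ℕ // S.card = N}, charlierWeight θ (S : Finset ℕ) = c⁻¹ := by
    have := tsum_subtype {S : Finset ℕ | S.card = N} (charlierWeight θ)
    refine this.trans ?_
    have e : ∀ S : Finset ℕ, (if S.card = N then c * charlierWeight θ S else 0) =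
        c * ({S : Finset ℕ | S.card = N}.indicator (charlierWeight θ) S) := by
      intro S
      simp only [Set.indicator_apply, Set.mem_ofPred_eq]
      split_ifs <;> simp
    simp_rw [e] at h1
    rw [tsum_mul_left] at h1
    exact eq_inv_of_mul_eq_one_right h1
  have e2 : ∑' S : {S : Finset ℕ // S.card = N ∧ ∀ i : Fin k, y i ∈ S},
      charlierWeight θ (S : Finset ℕ) = c⁻¹ * Matrix.det (Matrix.of fun i j : Fin k =>
      ∑ n ∈ Finset.range N, auxU θ (y i) n * auxU θ (y j) n) := by
    have := tsum_subtype {S : Finset ℕ | S.card = N ∧ ∀ i : Fin k, y i ∈ S} (charlierWeight θ)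
    refine this.trans ?_
    have e : ∀ S : Finset ℕ, (if S.card = N ∧ ∀ i : Fin k, y i ∈ S then c * charlierWeight θ S
        else 0) = c * ({S : Finset ℕ | S.card = N ∧ ∀ i : Fin k, y i ∈ S}.indicator
          (charlierWeight θ) S) := by
      intro S
      simp only [Set.indicator_apply, Set.mem_ofPred_eq]
      split_ifs <;> simp
    simp_rw [e] at h2
    rw [tsum_mul_left] at h2
    simp_rw [Finset.sum_range]
    rw [← h2]
    field_simp
  rw [e1, e2]
  field_simp

/-! ### Hermite side -/

def auxH (n : ℕ) : Polynomial ℝ := (Polynomial.hermite n).map (algebraMap ℤ ℝ)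

lemma auxH_eval (n : ℕ) (t : ℝ) : (auxH n).eval t = Polynomial.aeval t (Polynomial.hermite n) := by
  rw [auxH, Polynomial.eval_map_algebraMap]

lemma auxH_zero : auxH 0 = 1 := by simp [auxH]

lemma auxH_succ (n : ℕ) :
    auxH (n + 1) = Polynomial.X * auxH n - Polynomial.derivative (auxH n) := by
  simp [auxH, Polynomial.hermite_succ, Polynomial.derivative_map]

lemma auxH_deriv (n : ℕ) :
    Polynomial.derivative (auxH (n + 1)) = ((n : Polynomial ℝ) + 1) * auxH n := by
  induction n with
  | zero => simp [auxH_succ, auxH_zero]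
  | succ n ih =>
    rw [auxH_succ (n + 1), Polynomial.derivative_sub, Polynomial.derivative_mul, ih,
      Polynomial.derivative_X, Polynomial.derivative_mul]
    have h := auxH_succ n
    simp only [Polynomial.derivative_add, Polynomial.derivative_natCast, Polynomial.derivative_one]
    push_cast
    linear_combination (-(n : Polynomial ℝ) - 1) * h

lemma auxG_integrable (p : Polynomial ℝ) :
    MeasureTheory.Integrable (fun t : ℝ => Real.exp (-t ^ 2 / 2) * p.eval t) := by
  induction p using Polynomial.induction_on' with
  | add p q hp hq =>
    refine (hp.add hq).congr (MeasureTheory.ae_of_all _ fun t => ?_)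
    simp [mul_add]
  | monomial n a =>
    have := (integrable_rpow_mul_exp_neg_mul_sq (b := 1 / 2) (by norm_num) (s := n)
      (by have : (0 : ℝ) ≤ n := by positivity
          linarith)).const_mul a
    refine this.congr (MeasureTheory.ae_of_all _ fun t => ?_)
    simp only [Polynomial.eval_monomial, Real.rpow_natCast]
    rw [show -(1 / 2) * t ^ 2 = -t ^ 2 / 2 by ring]
    ring

lemma auxG_integral (p : Polynomial ℝ) (s : ℝ) :
    ∫ t in Set.Ioi s, Real.exp (-t ^ 2 / 2) *
      (Polynomial.X * p - Polynomial.derivative p).eval t = Real.exp (-s ^ 2 / 2) * p.eval s := by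
  have hd : ∀ t : ℝ, HasDerivAt (fun t : ℝ => -(Real.exp (-t ^ 2 / 2) * p.eval t))
      (Real.exp (-t ^ 2 / 2) * (Polynomial.X * p - Polynomial.derivative p).eval t) t := by
    intro t
    have h1 : HasDerivAt (fun t : ℝ => -t ^ 2 / 2) (-t) t := by
      have := ((hasDerivAt_pow 2 t).neg).div_const 2
      exact this.congr_deriv (by simp; try ring)
    have h2 := (h1.exp.mul (p.hasDerivAt t)).neg
    refine h2.congr_deriv ?_
    simp
    ring
  have hi := auxG_integrable (Polynomial.X * p - Polynomial.derivative p)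
  have ht := MeasureTheory.tendsto_zero_of_hasDerivAt_of_integrableOn_Ioi (a := s)
    (fun t _ => hd t) hi.integrableOn (auxG_integrable p).neg.integrableOn
  rw [MeasureTheory.integral_Ioi_of_hasDerivAt_of_tendsto' (fun t _ => hd t) hi.integrableOn ht]
  simp

def auxJ (s : ℝ) (x y : ℕ) : ℝ :=
  ∫ t in Set.Ioi s, Real.exp (-t ^ 2 / 2) * (auxH x * auxH y).eval t

lemma auxJ_symm (s : ℝ) (x y : ℕ) : auxJ s x y = auxJ s y x := by
  unfold auxJ; rw [mul_comm (auxH x)]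

lemma auxJ_zero (s : ℝ) (x : ℕ) :
    auxJ s (x + 1) 0 = Real.exp (-s ^ 2 / 2) * (auxH x).eval s := by
  rw [← auxG_integral, ← auxH_succ, auxJ, auxH_zero, mul_one]

lemma auxJ_succ (s : ℝ) (x y : ℕ) : auxJ s (x + 1) (y + 1) = (y + 1) * auxJ s x y +
    Real.exp (-s ^ 2 / 2) * ((auxH x).eval s * (auxH (y + 1)).eval s) := by
  have h := auxG_integral (auxH x * auxH (y + 1)) s
  rw [Polynomial.eval_mul] at h
  rw [← h, auxJ, auxJ, ← MeasureTheory.integral_const_mul, ← MeasureTheory.integral_add]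
  · congr 1
    ext t
    rw [Polynomial.derivative_mul, auxH_deriv, auxH_succ x]
    simp
    ring
  · exact ((auxG_integrable _).const_mul _).integrableOn
  · exact (auxG_integrable _).integrableOn

lemma auxJ_kernel (s : ℝ) (x y : ℕ) : discreteHermiteKernel s x y =
    (Real.sqrt (x ! : ℝ) * Real.sqrt (y ! : ℝ))⁻¹ * ((Real.sqrt (2 * Real.pi))⁻¹ * auxJ s x y) := by
  unfold discreteHermiteKernel auxJ
  rw [Real.sqrt_mul (by positivity), Real.sqrt_mul (by positivity)]
  simp only [Polynomial.eval_mul, auxH_eval, ← mul_assoc]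
  congr 1
  rw [mul_inv, mul_inv, mul_inv]
  ring

lemma auxH_rec (x : ℕ) (s : ℝ) : (auxH (x + 2)).eval s =
    s * (auxH (x + 1)).eval s - (x + 1) * (auxH x).eval s := by
  rw [auxH_succ (x + 1), auxH_deriv]
  simp

/-! ### Convergence of rescaled Charlier polynomials -/

lemma auxC_rec (θ : ℝ) (hθ : 0 < θ) (x j : ℕ) :
    θ * auxC θ (x + 2) j = (θ + (x + 1) - j) * auxC θ (x + 1) j - (x + 1) * auxC θ x j := by
  rw [auxC_succ θ (x + 1)]
  rcases j with _ | j
  · simp [auxC_zero_right]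
  · have h1 := auxC_shift θ (x + 1) j
    have h2 := auxC_succ θ x (j + 1)
    simp only [Nat.add_sub_cancel] at h1 h2 ⊢
    push_cast at h1 h2 ⊢
    have h0 : θ * (((j : ℝ) + 1) / θ) = j + 1 := by field_simp
    linear_combination (j + 1) * h1 - (x + 1) * h2 - auxC θ (x + 1) j * h0

lemma auxC_tendsto (θ : ℕ → ℝ) (hθ : ∀ n, 0 < θ n) (hinf : Tendsto θ atTop atTop) (j : ℕ → ℕ)
    (s : ℝ) (hj : Tendsto (fun n => (θ n - j n) / Real.sqrt (θ n)) atTop (𝓝 s)) (x : ℕ) :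
    Tendsto (fun n => Real.sqrt (θ n) ^ x * auxC (θ n) x (j n)) atTop (𝓝 ((auxH x).eval s)) := by
  have hsq : ∀ n, 0 < Real.sqrt (θ n) := fun n => Real.sqrt_pos.2 (hθ n)
  induction x using Nat.twoStepInduction with
  | zero => simp [auxC_zero, auxH_zero]
  | one =>
    have h1 : (auxH 1).eval s = s := by simp [auxH_succ, auxH_zero]
    rw [h1]
    refine hj.congr fun n => ?_
    rw [auxC_succ, auxC_zero, auxC_zero]
    have h2 := Real.mul_self_sqrt (hθ n).le
    have := hsq n
    have h3 := hθ n
    field_simp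
    linear_combination (-(θ n - j n)) * h2
  | more x ih0 ih1 =>
    rw [auxH_rec]
    have hinv : Tendsto (fun n => ((x : ℝ) + 1) / Real.sqrt (θ n)) atTop (𝓝 0) :=
      Tendsto.div_atTop tendsto_const_nhds (Real.tendsto_sqrt_atTop.comp hinf)
    have := ((hj.add hinv).mul ih1).sub (ih0.const_mul ((x : ℝ) + 1))
    rw [add_zero] at this
    refine this.congr fun n => ?_
    have h1 := auxC_rec (θ n) (hθ n) x (j n)
    have h2 := Real.mul_self_sqrt (hθ n).le
    have h3 := hsq n
    generalize auxC (θ n) (x + 2) (j n) = c2 at *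
    generalize auxC (θ n) (x + 1) (j n) = c1 at *
    generalize auxC (θ n) x (j n) = c0 at *
    generalize Real.sqrt (θ n) = r at *
    have h4 : ((θ n - j n) / r + ((x : ℝ) + 1) / r) * r = θ n - j n + x + 1 := by
      field_simp
      ring
    rw [← h2] at h1 h4 ⊢
    rw [pow_add, pow_add]
    linear_combination c1 * r ^ x * h4 - r ^ x * h1

/-! ### Poisson local limit theorem and central limit theorem -/

def auxSt (n : ℕ) : ℝ := Real.sqrt n * ((n : ℝ) / Real.exp 1) ^ n / (n ! : ℝ)

def auxE (n : ℕ) (v : ℝ) : ℝ := n * (Real.log (1 + v / Real.sqrt n) - v / Real.sqrt n)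

lemma auxSt_tendsto : Tendsto auxSt atTop (𝓝 (Real.sqrt (2 * Real.pi))⁻¹) := by
  have h := Stirling.tendsto_stirlingSeq_sqrt_pi
  have h2 := (h.const_mul (Real.sqrt 2)).inv₀ (by positivity)
  rw [Real.sqrt_mul (by norm_num)]
  refine h2.congr fun n => ?_
  unfold auxSt Stirling.stirlingSeq
  have : Real.sqrt (2 * (n : ℝ)) = Real.sqrt 2 * Real.sqrt n := Real.sqrt_mul (by norm_num) _
  rw [this]
  rcases n with _ | n
  · simp
  · field_simp

lemma auxP_eq (n : ℕ) (hn : 1 ≤ n) (v : ℝ) (hv : 0 < 1 + v / Real.sqrt n) :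
    Real.sqrt n * auxP (n + Real.sqrt n * v) n = auxSt n * Real.exp (auxE n v) := by
  have hn' : (0 : ℝ) < n := by exact_mod_cast hn
  have hs : 0 < Real.sqrt n := Real.sqrt_pos.2 hn'
  have h1 : (n : ℝ) + Real.sqrt n * v = n * (1 + v / Real.sqrt n) := by
    have h2 := Real.mul_self_sqrt hn'.le
    field_simp
    linear_combination (v) * h2
  have h3 : Real.exp (auxE n v) = (1 + v / Real.sqrt n) ^ n * Real.exp (-(n * (v / Real.sqrt n))) := by
    unfold auxE
    rw [mul_sub, sub_eq_add_neg, Real.exp_add, Real.exp_nat_mul, Real.exp_log hv]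
  unfold auxP auxSt
  rw [h3, h1, mul_pow, div_pow, ← Real.exp_nat_mul]
  rw [show -((n : ℝ) * (1 + v / Real.sqrt n)) = -(n * (v / Real.sqrt n)) + -((n : ℝ) * 1) by ring,
    Real.exp_add, Real.exp_neg ((n : ℝ) * 1)]
  field_simp

lemma auxE_bound (n : ℕ) (hn : 1 ≤ n) (v : ℝ) (hv : 0 < 1 + v / Real.sqrt n) :
    auxE n v ≤ (1 - v) / 2 := by
  have hn' : (1 : ℝ) ≤ n := by exact_mod_cast hn
  have hs : 1 ≤ Real.sqrt n := Real.one_le_sqrt.2 hn'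
  have hss := Real.mul_self_sqrt (zero_le_one.trans hn')
  unfold auxE
  by_cases h : v ≤ 1
  · have := Real.log_le_sub_one_of_pos hv
    have h2 : (n : ℝ) * (Real.log (1 + v / Real.sqrt n) - v / Real.sqrt n) ≤ 0 :=
      mul_nonpos_of_nonneg_of_nonpos (by linarith) (by linarith)
    linarith
  · push Not at h
    set a := v / Real.sqrt n with ha
    have ha0 : 0 ≤ a := by positivity
    have hav : a ≤ v := div_le_self (by linarith) hs
    have hna : (n : ℝ) * a ^ 2 = v ^ 2 := by
      rw [ha, div_pow, Real.sq_sqrt (by linarith)]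
      field_simp
    have h1 : Real.log (1 + a) ≤ ((1 + a) - (1 + a)⁻¹) / 2 := by
      rw [← Real.sinh_log hv]
      exact Real.self_le_sinh_iff.2 (Real.log_nonneg (by linarith))
    have h2 : ((1 + a) - (1 + a)⁻¹) / 2 - a = -(a ^ 2 / (2 * (1 + a))) := by
      field_simp
      ring
    calc (n : ℝ) * (Real.log (1 + a) - a) ≤ n * (-(a ^ 2 / (2 * (1 + a)))) := by
          gcongr
          linarith
      _ = -(v ^ 2 / (2 * (1 + a))) := by rw [← hna]; ring
      _ ≤ -(v ^ 2 / (2 * (1 + v))) := by gcongr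
      _ ≤ (1 - v) / 2 := by
        have : (v - 1) / 2 ≤ v ^ 2 / (2 * (1 + v)) := by
          rw [div_le_div_iff₀ (by norm_num) (by linarith)]
          nlinarith
        linarith

lemma aux_div_sqrt (v : ℕ → ℝ) (s : ℝ) (hv : Tendsto v atTop (𝓝 s)) :
    Tendsto (fun n : ℕ => v n / Real.sqrt n) atTop (𝓝 0) :=
  hv.div_atTop (Real.tendsto_sqrt_atTop.comp tendsto_natCast_atTop_atTop)

lemma auxE_tendsto (v : ℕ → ℝ) (s : ℝ) (hv : Tendsto v atTop (𝓝 s)) :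
    Tendsto (fun n => auxE n (v n)) atTop (𝓝 (-s ^ 2 / 2)) := by
  have ha := aux_div_sqrt v s hv
  have hlim : Tendsto (fun n => -(v n) ^ 2 / 2) atTop (𝓝 (-s ^ 2 / 2)) :=
    ((hv.pow 2).neg).div_const 2
  have hdiff : Tendsto (fun n => auxE n (v n) - (-(v n) ^ 2 / 2)) atTop (𝓝 0) := by
    have hb : Tendsto (fun n : ℕ => (v n) ^ 2 * (|v n / Real.sqrt n| / (1 - |v n / Real.sqrt n|)))
        atTop (𝓝 0) := by
      have h0 : Tendsto (fun n : ℕ => |v n / Real.sqrt n|) atTop (𝓝 0) := by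
        simpa using ha.abs
      have := (hv.pow 2).mul (h0.div (tendsto_const_nhds.sub h0 : Tendsto
        (fun n : ℕ => 1 - |v n / Real.sqrt n|) atTop (𝓝 (1 - 0))) (by norm_num))
      simpa using this
    refine squeeze_zero_norm' ?_ hb
    have hlt : ∀ᶠ n : ℕ in atTop, |v n / Real.sqrt n| < 1 := by
      have h0 : Tendsto (fun n : ℕ => |v n / Real.sqrt n|) atTop (𝓝 0) := by
        simpa using ha.abs
      exact h0.eventually (gt_mem_nhds one_pos)
    filter_upwards [hlt, eventually_ge_atTop 1] with n hn hn1
    have hn' : (0 : ℝ) < n := by exact_mod_cast hn1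
    have h1 := Real.abs_log_sub_add_sum_range_le (x := -(v n / Real.sqrt n)) (by rwa [abs_neg]) 2
    rw [abs_neg] at h1
    set a := v n / Real.sqrt n with hadef
    have hna : (n : ℝ) * a ^ 2 = v n ^ 2 := by
      rw [hadef, div_pow, Real.sq_sqrt hn'.le]
      field_simp
    simp only [Finset.sum_range_succ, Finset.sum_range_zero, sub_neg_eq_add] at h1
    have h2 : auxE n (v n) - (-(v n) ^ 2 / 2) = n * (Real.log (1 + a) - a + a ^ 2 / 2) := by
      unfold auxE
      rw [← hna]
      ring
    rw [h2, Real.norm_eq_abs, abs_mul, abs_of_pos hn', ← hna]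
    have h3 : Real.log (1 + a) - a + a ^ 2 / 2 = 0 + (-a) ^ (0 + 1) / (((0 : ℕ) : ℝ) + 1) +
        (-a) ^ (1 + 1) / (((1 : ℕ) : ℝ) + 1) + Real.log (1 + a) := by
      norm_num
      ring
    rw [h3]
    calc _ ≤ n * (|a| ^ (2 + 1) / (1 - |a|)) := by gcongr
      _ = _ := by rw [← sq_abs a]; ring
  have := hdiff.add hlim
  simpa using this

lemma aux_local (v : ℕ → ℝ) (s : ℝ) (hv : Tendsto v atTop (𝓝 s)) :
    Tendsto (fun n : ℕ => Real.sqrt n * auxP (n + Real.sqrt n * v n) n) atTop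
      (𝓝 ((Real.sqrt (2 * Real.pi))⁻¹ * Real.exp (-s ^ 2 / 2))) := by
  have h := auxSt_tendsto.mul (auxE_tendsto v s hv).rexp
  refine h.congr' ?_
  have ha := aux_div_sqrt v s hv
  filter_upwards [ha.eventually (lt_mem_nhds (show (-1 : ℝ) < 0 by norm_num)),
    eventually_ge_atTop 1] with n h1 h2
  exact (auxP_eq n h2 _ (by linarith)).symm

lemma auxP_deriv (n : ℕ) (u : ℝ) :
    HasDerivAt (fun u => ∑ j ∈ Finset.range (n + 1), auxP u j) (-auxP u n) u := by
  have hexp : HasDerivAt (fun u : ℝ => Real.exp (-u)) (-Real.exp (-u)) u := by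
    have := (hasDerivAt_neg u).exp
    exact this.congr_deriv (by ring)
  induction n with
  | zero =>
    simp only [zero_add, Finset.sum_range_one, auxP, pow_zero, Nat.factorial_zero, Nat.cast_one,
      div_one, mul_one]
    exact hexp
  | succ n ih =>
    simp_rw [Finset.sum_range_succ _ (n + 1)]
    have h1 : HasDerivAt (fun u => auxP u (n + 1)) (auxP u n - auxP u (n + 1)) u := by
      unfold auxP
      have := hexp.mul ((hasDerivAt_pow (n + 1) u).div_const ((n + 1) ! : ℝ))
      refine this.congr_deriv ?_
      simp only [Nat.add_sub_cancel]
      rw [Nat.factorial_succ]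
      push_cast
      field_simp
      ring
    exact (ih.add h1).congr_deriv (by ring)

lemma auxP_sum_tendsto (n : ℕ) :
    Tendsto (fun u => ∑ j ∈ Finset.range (n + 1), auxP u j) atTop (𝓝 0) := by
  have : ∀ j ∈ Finset.range (n + 1), Tendsto (fun u => auxP u j) atTop (𝓝 0) := by
    intro j _
    have := (Real.tendsto_pow_mul_exp_neg_atTop_nhds_zero j).div_const (j ! : ℝ)
    rw [zero_div] at this
    refine this.congr fun u => ?_
    unfold auxP
    ring
  simpa using tendsto_finsetSum _ this

lemma aux_cdf (n : ℕ) (hn : 1 ≤ n) (a : ℝ) (ha : 0 ≤ n + Real.sqrt n * a) :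
    ∫ v in Set.Ioi a, Real.sqrt n * auxP (n + Real.sqrt n * v) n =
      auxT (n + Real.sqrt n * a) n 0 0 := by
  have hn' : (0 : ℝ) < n := by exact_mod_cast hn
  have hs : 0 < Real.sqrt n := Real.sqrt_pos.2 hn'
  have hT : auxT (n + Real.sqrt n * a) n 0 0 =
      ∑ j ∈ Finset.range (n + 1), auxP (n + Real.sqrt n * a) j := by
    simp [auxT, auxC_zero]
  rw [hT]
  have hd : ∀ v : ℝ, HasDerivAt
      (fun v => -∑ j ∈ Finset.range (n + 1), auxP (n + Real.sqrt n * v) j)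
      (Real.sqrt n * auxP (n + Real.sqrt n * v) n) v := by
    intro v
    have h1 : HasDerivAt (fun v : ℝ => (n : ℝ) + Real.sqrt n * v) (Real.sqrt n) v := by
      have := ((hasDerivAt_id v).const_mul (Real.sqrt n)).const_add (n : ℝ)
      exact this.congr_deriv (by simp)
    have := (HasDerivAt.comp v (auxP_deriv n (n + Real.sqrt n * v)) h1).neg
    exact this.congr_deriv (by ring)
  have hlin : Tendsto (fun v : ℝ => (n : ℝ) + Real.sqrt n * v) atTop atTop :=
    tendsto_atTop_add_const_left _ _ (tendsto_id.const_mul_atTop hs)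
  have ht : Tendsto (fun v => -∑ j ∈ Finset.range (n + 1), auxP (n + Real.sqrt n * v) j) atTop
      (𝓝 0) := by
    have := ((auxP_sum_tendsto n).comp hlin).neg
    rwa [neg_zero] at this
  rw [MeasureTheory.integral_Ioi_of_hasDerivAt_of_nonneg' (fun v _ => hd v) ?_ ht]
  · simp
  · intro v hv
    have : 0 ≤ n + Real.sqrt n * v := by
      have := mul_le_mul_of_nonneg_left (le_of_lt (Set.mem_Ioi.1 hv)) hs.le
      linarith
    unfold auxP
    positivity

lemma aux_clt (v : ℕ → ℝ) (s : ℝ) (hv : Tendsto v atTop (𝓝 s)) :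
    Tendsto (fun n : ℕ => auxT (n + Real.sqrt n * v n) n 0 0) atTop
      (𝓝 ((Real.sqrt (2 * Real.pi))⁻¹ * ∫ t in Set.Ioi s, Real.exp (-t ^ 2 / 2))) := by
  set c := (Real.sqrt (2 * Real.pi))⁻¹ with hc
  have hsq : Tendsto (fun n : ℕ => Real.sqrt n) atTop atTop :=
    Real.tendsto_sqrt_atTop.comp tendsto_natCast_atTop_atTop
  have hvs : ∀ᶠ n in atTop, s - 1 < v n := hv.eventually (lt_mem_nhds (by linarith))
  have hpos : ∀ᶠ n : ℕ in atTop, ∀ w, s - 1 < w → 0 < 1 + w / Real.sqrt n := by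
    filter_upwards [hsq.eventually_gt_atTop (|s - 1|), eventually_ge_atTop 1] with n h1 h2 w hw
    have hs : 0 < Real.sqrt n := Real.sqrt_pos.2 (by exact_mod_cast h2)
    have h3 : -Real.sqrt n < w := by
      have := neg_abs_le (s - 1)
      linarith
    have : -1 < w / Real.sqrt n := by
      rw [lt_div_iff₀ hs]; linarith
    linarith
  have hSt : ∀ᶠ n in atTop, auxSt n ≤ c + 1 :=
    (auxSt_tendsto.eventually (gt_mem_nhds (lt_add_one c))).mono fun n h => le_of_lt h
  set F : ℕ → ℝ → ℝ := fun n => (Set.Ioi (v n)).indicator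
    (fun w => Real.sqrt n * auxP (n + Real.sqrt n * w) n) with hF
  set bound : ℝ → ℝ := (Set.Ioi (s - 1)).indicator (fun w => (c + 1) * Real.exp ((1 - w) / 2))
    with hbound
  have key : Tendsto (fun n => ∫ w, F n w) atTop
      (𝓝 (∫ w, (Set.Ioi s).indicator (fun t => c * Real.exp (-t ^ 2 / 2)) w)) := by
    refine MeasureTheory.tendsto_integral_filter_of_dominated_convergence bound ?_ ?_ ?_ ?_
    · refine Eventually.of_forall fun n => ?_
      refine (Measurable.indicator ?_ measurableSet_Ioi).aestronglyMeasurable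
      unfold auxP
      fun_prop
    · filter_upwards [hvs, hpos, hSt, eventually_ge_atTop 1] with n h1 h2 h3 h4
      refine MeasureTheory.ae_of_all _ fun w => ?_
      simp only [hF, hbound]
      by_cases hw : w ∈ Set.Ioi (v n)
      · have hw' : s - 1 < w := h1.trans hw
        rw [Set.indicator_of_mem hw, Set.indicator_of_mem (Set.mem_Ioi.2 hw'),
          auxP_eq n h4 w (h2 w hw')]
        have h5 := auxE_bound n h4 w (h2 w hw')
        have h6 : 0 ≤ auxSt n := by unfold auxSt; positivity
        rw [Real.norm_of_nonneg (mul_nonneg h6 (Real.exp_pos _).le)]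
        gcongr
      · rw [Set.indicator_of_notMem hw, norm_zero]
        refine Set.indicator_nonneg (fun w _ => ?_) w
        have : 0 ≤ c := by positivity
        positivity
    · rw [hbound, MeasureTheory.integrable_indicator_iff measurableSet_Ioi]
      have := (exp_neg_integrableOn_Ioi (s - 1) (b := 1 / 2) (by norm_num)).const_mul
        ((c + 1) * Real.exp (1 / 2))
      refine this.congr (MeasureTheory.ae_of_all _ fun w => ?_)
      simp only
      rw [mul_assoc, ← Real.exp_add]
      congr 2
      ring
    · have hne : ∀ᵐ w : ℝ, w ≠ s := by
        rw [MeasureTheory.ae_iff]; simp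
      filter_upwards [hne] with w hw
      rcases lt_or_gt_of_ne hw with h | h
      · rw [Set.indicator_of_notMem (by simp [h.le])]
        refine tendsto_const_nhds.congr' ?_
        filter_upwards [hv.eventually (lt_mem_nhds h)] with n hn
        simp only [hF]
        rw [Set.indicator_of_notMem (by simp [hn.le])]
      · rw [Set.indicator_of_mem (Set.mem_Ioi.2 h)]
        refine (aux_local (fun _ => w) w tendsto_const_nhds).congr' ?_
        filter_upwards [hv.eventually (gt_mem_nhds h)] with n hn
        simp only [hF]
        rw [Set.indicator_of_mem (Set.mem_Ioi.2 hn)]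
  rw [MeasureTheory.integral_indicator measurableSet_Ioi, MeasureTheory.integral_const_mul] at key
  refine key.congr' ?_
  filter_upwards [hvs, hpos, eventually_ge_atTop 1] with n h1 h2 h3
  simp only [hF]
  rw [MeasureTheory.integral_indicator measurableSet_Ioi, aux_cdf n h3]
  have hn' : (0 : ℝ) < n := by exact_mod_cast h3
  have h4 := h2 (v n) h1
  have hs : 0 < Real.sqrt n := Real.sqrt_pos.2 hn'
  have h5 := Real.mul_self_sqrt hn'.le
  have : (n : ℝ) + Real.sqrt n * v n = n * (1 + v n / Real.sqrt n) := by
    field_simp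
    linear_combination v n * h5
  rw [this]
  positivity

lemma aux_kernel_eq (θ : ℝ) (hθ : 0 < θ) (N x y : ℕ) :
    ∑ n ∈ Finset.range (N + 1), auxU θ x n * auxU θ y n =
      (Real.sqrt (x ! : ℝ) * Real.sqrt (y ! : ℝ))⁻¹ *
        (Real.sqrt θ ^ x * Real.sqrt θ ^ y * auxT θ N x y) := by
  unfold auxT
  rw [Finset.mul_sum, Finset.mul_sum]
  refine Finset.sum_congr rfl fun n _ => ?_
  rw [auxU_symm θ hθ x n, auxU_symm θ hθ y n]
  unfold auxU
  have hP : 0 ≤ auxP θ n := by unfold auxP; positivity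
  have h1 := Real.mul_self_sqrt hP
  have h2 : ∀ x : ℕ, Real.sqrt (θ ^ x / (x ! : ℝ)) = Real.sqrt θ ^ x * (Real.sqrt (x ! : ℝ))⁻¹ := by
    intro x
    rw [Real.sqrt_div (by positivity), div_eq_mul_inv]
    congr 1
    rw [Real.sqrt_eq_iff_mul_self_eq (by positivity) (by positivity), ← mul_pow,
      Real.mul_self_sqrt hθ.le]
  rw [h2, h2, mul_inv]
  linear_combination (Real.sqrt θ ^ x * (Real.sqrt (x ! : ℝ))⁻¹ * (Real.sqrt θ ^ y *
    (Real.sqrt (y ! : ℝ))⁻¹) * auxC θ x n * auxC θ y n) * h1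

lemma aux_A_tendsto (θ : ℕ → ℝ) (hθ : ∀ n, 0 < θ n) (s : ℝ)
    (h0 : Tendsto (fun n => auxT (θ n) n 0 0) atTop
      (𝓝 ((Real.sqrt (2 * Real.pi))⁻¹ * auxJ s 0 0)))
    (hP : Tendsto (fun n => Real.sqrt (θ n) * auxP (θ n) n) atTop
      (𝓝 ((Real.sqrt (2 * Real.pi))⁻¹ * Real.exp (-s ^ 2 / 2))))
    (hC : ∀ x, Tendsto (fun n => Real.sqrt (θ n) ^ x * auxC (θ n) x n) atTop
      (𝓝 ((auxH x).eval s)))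
    (hC' : ∀ x, Tendsto (fun n => Real.sqrt (θ n) ^ x * auxC (θ n) x (n + 1)) atTop
      (𝓝 ((auxH x).eval s))) (x y : ℕ) :
    Tendsto (fun n => Real.sqrt (θ n) ^ x * Real.sqrt (θ n) ^ y * auxT (θ n) n x y) atTop
      (𝓝 ((Real.sqrt (2 * Real.pi))⁻¹ * auxJ s x y)) := by
  have hz : ∀ x, Tendsto (fun n => Real.sqrt (θ n) ^ (x + 1) * Real.sqrt (θ n) ^ 0 *
      auxT (θ n) n (x + 1) 0) atTop (𝓝 ((Real.sqrt (2 * Real.pi))⁻¹ * auxJ s (x + 1) 0)) := by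
    intro x
    rw [auxJ_zero, ← mul_assoc]
    refine (hP.mul (hC x)).congr fun n => ?_
    rw [auxT_zero _ (hθ n)]
    ring
  induction x generalizing y with
  | zero =>
    rcases y with _ | y
    · simpa using h0
    · rw [auxJ_symm]
      refine (hz y).congr fun n => ?_
      rw [auxT_symm]
      ring
  | succ x ih =>
    rcases y with _ | y
    · exact hz x
    · have := ((ih y).const_mul ((y : ℝ) + 1)).add (hP.mul ((hC x).mul (hC' (y + 1))))
      rw [auxJ_succ]
      rw [show (Real.sqrt (2 * Real.pi))⁻¹ * (((y : ℝ) + 1) * auxJ s x y + Real.exp (-s ^ 2 / 2) *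
        ((auxH x).eval s * (auxH (y + 1)).eval s)) = ((y : ℝ) + 1) *
        ((Real.sqrt (2 * Real.pi))⁻¹ * auxJ s x y) + (Real.sqrt (2 * Real.pi))⁻¹ *
        Real.exp (-s ^ 2 / 2) * ((auxH x).eval s * (auxH (y + 1)).eval s) by ring]
      refine this.congr fun n => ?_
      rw [auxT_succ _ (hθ n)]
      have h1 := Real.mul_self_sqrt (hθ n).le
      have h2 : Real.sqrt (θ n) * Real.sqrt (θ n) * (((y : ℝ) + 1) / θ n) = y + 1 := by
        rw [h1]
        have := hθ n
        field_simp
      rw [pow_succ (Real.sqrt (θ n)) x, pow_succ (Real.sqrt (θ n)) y]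
      linear_combination (-(Real.sqrt (θ n) ^ x * Real.sqrt (θ n) ^ y * auxT (θ n) n x y)) * h2

lemma aux_main (s : ℝ) (θ : ℕ → ℝ) (hpos : ∀ N, 0 < θ N)
    (hlim : Tendsto (fun N : ℕ => (θ N - (N : ℝ)) / Real.sqrt (N : ℝ)) atTop (𝓝 s)) (x y : ℕ) :
    Tendsto (fun n : ℕ => ∑ j ∈ Finset.range (n + 1), auxU (θ (n + 1)) x j * auxU (θ (n + 1)) y j)
      atTop (𝓝 (discreteHermiteKernel s x y)) := by
  set t : ℕ → ℝ := fun n => θ (n + 1) with ht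
  have htpos : ∀ n, 0 < t n := fun n => hpos _
  have hsq : Tendsto (fun n : ℕ => Real.sqrt n) atTop atTop :=
    Real.tendsto_sqrt_atTop.comp tendsto_natCast_atTop_atTop
  have hinvs : Tendsto (fun n : ℕ => (Real.sqrt n)⁻¹) atTop (𝓝 0) := hsq.inv_tendsto_atTop
  set v : ℕ → ℝ := fun n => (t n - n) / Real.sqrt n with hv
  have hvlim : Tendsto v atTop (𝓝 s) := by
    have h1 := hlim.comp (tendsto_add_atTop_nat 1)
    have h2 : Tendsto (fun n : ℕ => Real.sqrt (1 + (n : ℝ)⁻¹)) atTop (𝓝 1) := by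
      have : Tendsto (fun n : ℕ => 1 + (n : ℝ)⁻¹) atTop (𝓝 (1 + 0)) :=
        tendsto_const_nhds.add tendsto_inv_atTop_nhds_zero_nat
      simpa using this.sqrt
    have h3 := (h1.mul h2).add hinvs
    rw [mul_one, add_zero] at h3
    refine h3.congr' ?_
    filter_upwards [eventually_ge_atTop 1] with n hn
    have hn' : (0 : ℝ) < n := by exact_mod_cast hn
    have e : 1 + (n : ℝ)⁻¹ = (n + 1) / n := by field_simp
    have hs : 0 < Real.sqrt n := Real.sqrt_pos.2 hn'
    have hs1 : 0 < Real.sqrt ((n : ℝ) + 1) := Real.sqrt_pos.2 (by linarith)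
    simp only [Function.comp, hv, ht]
    rw [e, Real.sqrt_div (by positivity)]
    push_cast
    field_simp
    ring
  have hteq : ∀ᶠ n : ℕ in atTop, (n : ℝ) + Real.sqrt n * v n = t n := by
    filter_upwards [eventually_ge_atTop 1] with n hn
    have hn' : (0 : ℝ) < n := by exact_mod_cast hn
    have hs : 0 < Real.sqrt n := Real.sqrt_pos.2 hn'
    simp only [hv]
    field_simp
    ring
  -- ratio
  have hratio : Tendsto (fun n : ℕ => t n / n) atTop (𝓝 1) := by
    have h1 : Tendsto (fun n : ℕ => 1 + v n / Real.sqrt n) atTop (𝓝 (1 + 0)) :=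
      tendsto_const_nhds.add (aux_div_sqrt v s hvlim)
    rw [add_zero] at h1
    refine h1.congr' ?_
    filter_upwards [eventually_ge_atTop 1] with n hn
    have hn' : (0 : ℝ) < n := by exact_mod_cast hn
    simp only [hv]
    rw [div_div, Real.mul_self_sqrt hn'.le]
    field_simp
    ring
  have hrs : Tendsto (fun n : ℕ => Real.sqrt (t n) / Real.sqrt n) atTop (𝓝 1) := by
    have := hratio.sqrt
    rw [Real.sqrt_one] at this
    exact this.congr fun n => Real.sqrt_div (htpos n).le _
  have htinf : Tendsto t atTop atTop := by
    have := hratio.pos_mul_atTop one_pos (tendsto_natCast_atTop_atTop (R := ℝ))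
    refine this.congr' ?_
    filter_upwards [eventually_ge_atTop 1] with n hn
    have hn' : (0 : ℝ) < n := by exact_mod_cast hn
    field_simp
  have hj0 : Tendsto (fun n : ℕ => (t n - n) / Real.sqrt (t n)) atTop (𝓝 s) := by
    have := hvlim.div hrs one_ne_zero
    rw [div_one] at this
    refine this.congr' ?_
    filter_upwards [eventually_ge_atTop 1] with n hn
    have hs : 0 < Real.sqrt n := Real.sqrt_pos.2 (by exact_mod_cast hn)
    have hs2 : 0 < Real.sqrt (t n) := Real.sqrt_pos.2 (htpos n)
    simp only [hv, Pi.div_apply]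
    field_simp
  have hj1 : Tendsto (fun n : ℕ => (t n - (n + 1 : ℕ)) / Real.sqrt (t n)) atTop (𝓝 s) := by
    have h1 : Tendsto (fun n : ℕ => (Real.sqrt (t n))⁻¹) atTop (𝓝 0) :=
      (Real.tendsto_sqrt_atTop.comp htinf).inv_tendsto_atTop
    have := hj0.sub h1
    rw [sub_zero] at this
    refine this.congr fun n => ?_
    push_cast
    ring
  have hA := aux_A_tendsto t htpos s
    (by
      have := aux_clt v s hvlim
      have e : auxJ s 0 0 = ∫ t in Set.Ioi s, Real.exp (-t ^ 2 / 2) := by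
        simp [auxJ, auxH_zero]
      rw [e]
      refine this.congr' ?_
      filter_upwards [hteq] with n hn
      rw [hn])
    (by
      have := hrs.mul (aux_local v s hvlim)
      rw [one_mul] at this
      refine this.congr' ?_
      filter_upwards [hteq, eventually_ge_atTop 1] with n hn hn1
      have hs : 0 < Real.sqrt n := Real.sqrt_pos.2 (by exact_mod_cast hn1)
      rw [hn]
      field_simp)
    (fun x => auxC_tendsto t htpos htinf (fun n => n) s hj0 x)
    (fun x => auxC_tendsto t htpos htinf (fun n => n + 1) s hj1 x) x y
  rw [auxJ_kernel]
  refine (hA.const_mul _).congr fun n => ?_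
  rw [aux_kernel_eq _ (htpos n)]

/-- Main theorem: the correlation functions of the `N`-particle Charlier ensemble (equal to
the poissonized Schur–Weyl measure with `θ = ν/N` under `x_i = λ_i + N − i`) in the regime
`(θ(N) − N)/√N → s` (i.e. `ν = N² + (s+o(1))·N^{3/2}`) converge to the determinants of the
discrete Hermite kernel: for any `k ≥ 1` and distinct `y_1, …, y_k ∈ ℕ`,
`lim_{N→∞} Z(N,θ(N))⁻¹ · Σ_{|S| = N, S ⊇ {y_1,…,y_k}} weight_{θ(N)}(S)
  = det[K_s(y_i,y_j)]_{i,j=1}^k`. -/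
theorem charlier_correlation_functions_tendsto_hermite_determinant
    (s : ℝ) (θ : ℕ → ℝ) (hpos : ∀ N, 0 < θ N)
    (hlim : Tendsto (fun N : ℕ => (θ N - (N : ℝ)) / Real.sqrt (N : ℝ)) atTop (𝓝 s))
    (k : ℕ) (hk : 1 ≤ k) (y : Fin k → ℕ) (hy : Function.Injective y) :
    Tendsto
      (fun N : ℕ =>
        (∑' S : {S : Finset ℕ // S.card = N ∧ ∀ i : Fin k, y i ∈ S},
            charlierWeight (θ N) (S : Finset ℕ)) /
          ∑' S : {S : Finset ℕ // S.card = N}, charlierWeight (θ N) (S : Finset ℕ))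
      atTop
      (𝓝 (Matrix.det (Matrix.of fun i j : Fin k => discreteHermiteKernel s (y i) (y j)))) := by
  simp_rw [fun N => aux_ratio (θ N) (hpos N) N k y hy]
  rw [← tendsto_add_atTop_iff_nat 1]
  have hc : Continuous fun B : Matrix (Fin k) (Fin k) ℝ => B.det :=
    Continuous.matrix_det continuous_id
  refine (hc.tendsto _).comp ?_
  refine tendsto_pi_nhds.2 fun i => tendsto_pi_nhds.2 fun j => ?_
  exact aux_main s θ hpos hlim (y i) (y j)

end
end
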